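/- Let n ≥ 1 be an integer, Ω ⊂ ℝⁿ a bounded open set, T > 0, x₀ ∈ ℝⁿ \ cl(Ω), and β ∈ (0,1) with sup_{x∈Ω}|x−x₀| < βT. Let C₀ > 0 be such that ψ ≥ 1 on Ω × (−T,T), where ψ(x,t) = |x−x₀|² − βt² + C₀. Then there exists λ > 0, independent of m, such that for every m > 0 there exist s₀(m) > 0 and M(m) > 0 with the following property: with φ = e^{λψ}, for every measurable time-independent potential q : Ω → ℝ with |q| ≤ m almost everywhere, every s ≥ s₀(m), and every smooth function z : ℝⁿ × [0,T] → ℝ vanishing for x outside a compact subset of Ω and satisfying z(x,0) = 0 for all x ∈ Ω: s^{1/2} ∫_Ω e^{2sφ(x,0)} |∂ₜz(x,0)|² dx + s ∫_{0}^{T} ∫_Ω e^{2sφ} (|∂ₜz|² + |∇z|²) dx dt + s³ ∫_{0}^{T} ∫_Ω e^{2sφ} |z|² dx dt ≤ M ∫_{0}^{T} ∫_Ω e^{2sφ} |∂ₜ²z − Δz + qz|² dx dt. -/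

import Mathlib

open MeasureTheory Real Set
open scoped RealInnerProductSpace

/-- The Laplacian of a real-valued function on Euclidean space. -/
noncomputable def lap {n : ℕ} (f : EuclideanSpace ℝ (Fin n) → ℝ) (x : EuclideanSpace ℝ (Fin n)) : ℝ :=
  ∑ i : Fin n, fderiv ℝ (fun y => fderiv ℝ f y (EuclideanSpace.single i 1)) x (EuclideanSpace.single i 1)

/-- The weight `ψ(x,t) = |x - x₀|² - β t² + C₀`. -/
noncomputable def psi {n : ℕ} (x₀ : EuclideanSpace ℝ (Fin n)) (β C₀ : ℝ)
    (x : EuclideanSpace ℝ (Fin n)) (t : ℝ) : ℝ :=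
  ‖x - x₀‖ ^ 2 - β * t ^ 2 + C₀

/-- The Carleman weight `φ = e^{λψ}`. -/
noncomputable def phi {n : ℕ} (x₀ : EuclideanSpace ℝ (Fin n)) (β C₀ l : ℝ)
    (x : EuclideanSpace ℝ (Fin n)) (t : ℝ) : ℝ :=
  Real.exp (l * psi x₀ β C₀ x t)

/-!
Conjugating the wave operator `□ = ∂ₜ² - Δ` with a weight `Φ` and multiplying by the skew part of
the conjugated operator turns the estimate into a pointwise identity: a divergence plus a quadratic
form in `(∇w, w)`, whose positivity is the pseudoconvexity of `Φ`.

For `φ = e^{λψ}`, the Hessian of `ψ` equals `(1 - β)|ξ|²` up to a multiple of the form of `□`, which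
the multiplier absorbs, and `∇ψ ≠ 0` on `Ω` lets a large `λ` make the zeroth-order coefficient
positive. Since `z(·, 0) = 0`, the flux through `t = 0` is proportional to `∂ₜΦ (∂ₜz)²`, which
vanishes for `Φ = φ` because `φ` is even in time; tilting `φ` to `Φ = φ + τt` with `τ` of order
`s^{-1/2}` perturbs the other terms by absorbable errors and produces exactly
`s^{1/2} |∂ₜz(·, 0)|²`. At `t = T` the condition `βT > sup |x - x₀|` gives the flux the right sign,
so no time cut-off is needed.
-/

/-! ### Calculus along a weighted frame -/

/-- Directions `dir a` with coefficients `coeff a`, encoding the constant-coefficient operator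
`∑ a, coeff a * ∂ₐ²`, where `∂ₐ` is the derivative in the direction `dir a`. The Minkowski frame
below turns this operator into the wave operator. -/
structure WeightedFrame (ι E : Type*) where
  dir : ι → E
  coeff : ι → ℝ

namespace WeightedFrame

section Form

variable {ι E : Type*} [Fintype ι] (𝓕 : WeightedFrame ι E)

/-- The symmetric bilinear form on covectors whose diagonal entries are the coefficients. -/
def form (ξ η : ι → ℝ) : ℝ := ∑ a, 𝓕.coeff a * (ξ a * η a)

lemma form_comm (ξ η : ι → ℝ) : 𝓕.form ξ η = 𝓕.form η ξ := by
  simp only [form, mul_comm]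

lemma form_smul_left (c : ℝ) (ξ η : ι → ℝ) : 𝓕.form (fun a => c * ξ a) η = c * 𝓕.form ξ η := by
  simp only [form, Finset.mul_sum]
  exact Finset.sum_congr rfl fun a _ => by ring

end Form

variable {ι E : Type*} [NormedAddCommGroup E] [NormedSpace ℝ E] (𝓕 : WeightedFrame ι E)
  {f g h : E → ℝ} {p : E}

/-- The derivative `∂ₐ f` in the direction `dir a`. -/
noncomputable def pderiv (a : ι) (f : E → ℝ) (p : E) : ℝ := fderiv ℝ f p (𝓕.dir a)

/-- The gradient of `f` weighted by the coefficients of the frame. -/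
noncomputable def grad (f : E → ℝ) (a : ι) (p : E) : ℝ := 𝓕.coeff a * 𝓕.pderiv a f p

lemma contDiff_pderiv {m k : WithTop ℕ∞} (hf : ContDiff ℝ k f) (hmk : m + 1 ≤ k) (a : ι) :
    ContDiff ℝ m (𝓕.pderiv a f) :=
  (hf.fderiv_right hmk).clm_apply contDiff_const

lemma contDiff_one_pderiv (hf : ContDiff ℝ 2 f) (a : ι) : ContDiff ℝ 1 (𝓕.pderiv a f) :=
  𝓕.contDiff_pderiv hf (by norm_num) a

lemma contDiff_one_grad (hf : ContDiff ℝ 2 f) (a : ι) : ContDiff ℝ 1 (𝓕.grad f a) :=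
  contDiff_const.mul (𝓕.contDiff_one_pderiv hf a)

lemma differentiable_pderiv (hf : ContDiff ℝ 2 f) (a : ι) : Differentiable ℝ (𝓕.pderiv a f) :=
  (𝓕.contDiff_one_pderiv hf a).differentiable one_ne_zero

lemma pderiv_add (hf : DifferentiableAt ℝ f p) (hg : DifferentiableAt ℝ g p) (a : ι) :
    𝓕.pderiv a (fun x => f x + g x) p = 𝓕.pderiv a f p + 𝓕.pderiv a g p := by
  simp only [pderiv, fderiv_fun_add hf hg, add_apply]

lemma pderiv_sub (hf : DifferentiableAt ℝ f p) (hg : DifferentiableAt ℝ g p) (a : ι) :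
    𝓕.pderiv a (fun x => f x - g x) p = 𝓕.pderiv a f p - 𝓕.pderiv a g p := by
  simp only [pderiv, fderiv_fun_sub hf hg, sub_apply]

lemma pderiv_mul (hf : DifferentiableAt ℝ f p) (hg : DifferentiableAt ℝ g p) (a : ι) :
    𝓕.pderiv a (fun x => f x * g x) p = 𝓕.pderiv a f p * g p + f p * 𝓕.pderiv a g p := by
  simp only [pderiv, fderiv_fun_mul hf hg, add_apply,
    smul_apply, smul_eq_mul]
  ring

lemma pderiv_const (a : ι) (c : ℝ) : 𝓕.pderiv a (fun _ => c) p = 0 := by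
  simp [pderiv]

lemma pderiv_const_mul (hf : DifferentiableAt ℝ f p) (a : ι) (c : ℝ) :
    𝓕.pderiv a (fun x => c * f x) p = c * 𝓕.pderiv a f p := by
  rw [𝓕.pderiv_mul (differentiableAt_const c) hf, pderiv_const, zero_mul, zero_add]

lemma pderiv_exp (hf : DifferentiableAt ℝ f p) (a : ι) :
    𝓕.pderiv a (fun x => exp (f x)) p = exp (f p) * 𝓕.pderiv a f p := by
  simp only [pderiv, fderiv_exp hf, smul_apply, smul_eq_mul]

lemma pderiv_exp_const_mul (hf : DifferentiableAt ℝ f p) (l : ℝ) (a : ι) :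
    𝓕.pderiv a (fun x => exp (l * f x)) p = l * exp (l * f p) * 𝓕.pderiv a f p := by
  rw [𝓕.pderiv_exp (hf.const_mul l), 𝓕.pderiv_const_mul hf]
  ring

lemma pderiv_comm (hf : ContDiff ℝ 2 f) (a b : ι) (p : E) :
    𝓕.pderiv a (𝓕.pderiv b f) p = 𝓕.pderiv b (𝓕.pderiv a f) p := by
  have fderiv_pderiv : ∀ a b, 𝓕.pderiv a (𝓕.pderiv b f) p
      = fderiv ℝ (fderiv ℝ f) p (𝓕.dir a) (𝓕.dir b) := by
    intro a b
    have hdf : DifferentiableAt ℝ (fderiv ℝ f) p :=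
      (hf.fderiv_right (m := 1) (by norm_num)).differentiable one_ne_zero p
    change fderiv ℝ (fun q => fderiv ℝ f q (𝓕.dir b)) p (𝓕.dir a) = _
    rw [fderiv_clm_apply hdf (differentiableAt_const _)]
    simp
  have hsymm : IsSymmSndFDerivAt ℝ f p := hf.contDiffAt.isSymmSndFDerivAt (by simp)
  rw [fderiv_pderiv, fderiv_pderiv, hsymm.eq]

lemma pderiv_eq_zero_of_forall_notMem {S : Set E} (hS : IsClosed S) (hf : ∀ q ∉ S, f q = 0)
    (hp : p ∉ S) (a : ι) : 𝓕.pderiv a f p = 0 := by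
  have hf' : f =ᶠ[nhds p] fun _ => 0 := by
    filter_upwards [hS.isOpen_compl.mem_nhds hp] with q hq using hf q hq
  rw [pderiv, hf'.fderiv_eq, fderiv_fun_const, Pi.zero_apply, zero_apply]

variable [Fintype ι]

/-- The divergence of a vector field given by its components along the frame. -/
noncomputable def div (J : ι → E → ℝ) (p : E) : ℝ := ∑ a, 𝓕.pderiv a (J a) p

/-- The operator `∑ a, coeff a * ∂ₐ²`. -/
noncomputable def box (f : E → ℝ) (p : E) : ℝ := 𝓕.div (𝓕.grad f) p

/-- The carré du champ `∑ a, coeff a * ∂ₐ f * ∂ₐ g`. -/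
noncomputable def gradInner (f g : E → ℝ) (p : E) : ℝ :=
  𝓕.form (𝓕.pderiv · f p) (𝓕.pderiv · g p)

/-- The Hessian of `f` evaluated on the vectors dual to the covectors `ξ` and `η`, the indices
being raised with the coefficients of the frame. -/
noncomputable def hess (f : E → ℝ) (p : E) (ξ η : ι → ℝ) : ℝ :=
  ∑ a, ∑ b, 𝓕.coeff a * 𝓕.coeff b * (𝓕.pderiv a (𝓕.pderiv b f) p * ξ a * η b)

lemma gradInner_comm (f g : E → ℝ) (p : E) : 𝓕.gradInner f g p = 𝓕.gradInner g f p :=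
  𝓕.form_comm _ _

lemma gradInner_add_left (hf : DifferentiableAt ℝ f p) (hg : DifferentiableAt ℝ g p) (h : E → ℝ) :
    𝓕.gradInner (fun x => f x + g x) h p = 𝓕.gradInner f h p + 𝓕.gradInner g h p := by
  simp only [gradInner, form, 𝓕.pderiv_add hf hg, ← Finset.sum_add_distrib]
  exact Finset.sum_congr rfl fun a _ => by ring

lemma gradInner_sub_left (hf : DifferentiableAt ℝ f p) (hg : DifferentiableAt ℝ g p) (h : E → ℝ) :
    𝓕.gradInner (fun x => f x - g x) h p = 𝓕.gradInner f h p - 𝓕.gradInner g h p := by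
  simp only [gradInner, form, 𝓕.pderiv_sub hf hg, ← Finset.sum_sub_distrib]
  exact Finset.sum_congr rfl fun a _ => by ring

lemma gradInner_mul_left (hf : DifferentiableAt ℝ f p) (hg : DifferentiableAt ℝ g p) (h : E → ℝ) :
    𝓕.gradInner (fun x => f x * g x) h p = f p * 𝓕.gradInner g h p + g p * 𝓕.gradInner f h p := by
  simp only [gradInner, form, 𝓕.pderiv_mul hf hg, Finset.mul_sum, ← Finset.sum_add_distrib]
  exact Finset.sum_congr rfl fun a _ => by ring

lemma gradInner_const_mul_left (hf : DifferentiableAt ℝ f p) (c : ℝ) (h : E → ℝ) :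
    𝓕.gradInner (fun x => c * f x) h p = c * 𝓕.gradInner f h p := by
  simp only [gradInner, 𝓕.pderiv_const_mul hf, form_smul_left]

lemma gradInner_exp_left (hf : DifferentiableAt ℝ f p) (h : E → ℝ) :
    𝓕.gradInner (fun x => exp (f x)) h p = exp (f p) * 𝓕.gradInner f h p := by
  simp only [gradInner, 𝓕.pderiv_exp hf, form_smul_left]

lemma contDiff_one_gradInner (hf : ContDiff ℝ 2 f) (hg : ContDiff ℝ 2 g) :
    ContDiff ℝ 1 (𝓕.gradInner f g) :=
  ContDiff.sum fun a _ => contDiff_const.mul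
    ((𝓕.contDiff_one_pderiv hf a).mul (𝓕.contDiff_one_pderiv hg a))

lemma contDiff_box {m k : WithTop ℕ∞} (hf : ContDiff ℝ k f) (hmk : m + 1 + 1 ≤ k) :
    ContDiff ℝ m (𝓕.box f) :=
  ContDiff.sum fun a _ => 𝓕.contDiff_pderiv (m := m)
    (contDiff_const.mul (𝓕.contDiff_pderiv hf hmk a)) le_rfl a

lemma continuous_box (hf : ContDiff ℝ 2 f) : Continuous (𝓕.box f) :=
  (𝓕.contDiff_box (m := 0) hf (by norm_num)).continuous

lemma box_eq_sum (hf : ContDiff ℝ 2 f) (p : E) :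
    𝓕.box f p = ∑ a, 𝓕.coeff a * 𝓕.pderiv a (𝓕.pderiv a f) p :=
  Finset.sum_congr rfl fun a _ =>
    𝓕.pderiv_const_mul (𝓕.differentiable_pderiv hf a p) a (𝓕.coeff a)

lemma box_const_mul (hf : ContDiff ℝ 2 f) (c : ℝ) (p : E) :
    𝓕.box (fun x => c * f x) p = c * 𝓕.box f p := by
  rw [𝓕.box_eq_sum (contDiff_const.mul hf), 𝓕.box_eq_sum hf, Finset.mul_sum]
  refine Finset.sum_congr rfl fun a _ => ?_
  rw [funext fun x => 𝓕.pderiv_const_mul (hf.differentiable two_ne_zero x) a c,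
    𝓕.pderiv_const_mul (𝓕.differentiable_pderiv hf a p)]
  ring

lemma hess_comm (hf : ContDiff ℝ 2 f) (p : E) (ξ η : ι → ℝ) :
    𝓕.hess f p ξ η = 𝓕.hess f p η ξ := by
  rw [hess, Finset.sum_comm]
  refine Finset.sum_congr rfl fun b _ => Finset.sum_congr rfl fun a _ => ?_
  rw [𝓕.pderiv_comm hf a b]
  ring

lemma hess_smul_smul (c : ℝ) (ξ η : ι → ℝ) :
    𝓕.hess f p (fun a => c * ξ a) (fun a => c * η a) = c ^ 2 * 𝓕.hess f p ξ η := by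
  simp only [hess, Finset.mul_sum]
  exact Finset.sum_congr rfl fun a _ => Finset.sum_congr rfl fun b _ => by ring

lemma hess_const_mul (hf : ContDiff ℝ 2 f) (c : ℝ) (p : E) (ξ η : ι → ℝ) :
    𝓕.hess (fun x => c * f x) p ξ η = c * 𝓕.hess f p ξ η := by
  simp only [hess, Finset.mul_sum]
  refine Finset.sum_congr rfl fun a _ => Finset.sum_congr rfl fun b _ => ?_
  rw [funext fun x => 𝓕.pderiv_const_mul (hf.differentiable two_ne_zero x) b c,
    𝓕.pderiv_const_mul (𝓕.differentiable_pderiv hf b p)]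
  ring

lemma pderiv_gradInner (hf : ContDiff ℝ 2 f) (hg : ContDiff ℝ 2 g) (a : ι) (p : E) :
    𝓕.pderiv a (𝓕.gradInner f g) p
      = ∑ b, 𝓕.coeff b * (𝓕.pderiv a (𝓕.pderiv b f) p * 𝓕.pderiv b g p
          + 𝓕.pderiv b f p * 𝓕.pderiv a (𝓕.pderiv b g) p) := by
  have hf' := 𝓕.differentiable_pderiv hf
  have hg' := 𝓕.differentiable_pderiv hg
  have hsum : 𝓕.pderiv a (𝓕.gradInner f g) p
      = ∑ b, 𝓕.pderiv a (fun x => 𝓕.coeff b * (𝓕.pderiv b f x * 𝓕.pderiv b g x)) p := by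
    unfold gradInner form
    rw [pderiv, fderiv_fun_sum fun b _ => ((hf' b p).fun_mul (hg' b p)).const_mul _,
      sum_apply]
    rfl
  rw [hsum]
  refine Finset.sum_congr rfl fun b _ => ?_
  rw [𝓕.pderiv_const_mul ((hf' b p).fun_mul (hg' b p)), 𝓕.pderiv_mul (hf' b p) (hg' b p)]

lemma gradInner_gradInner (hf : ContDiff ℝ 2 f) (hg : ContDiff ℝ 2 g) (h : E → ℝ) (p : E) :
    𝓕.gradInner (𝓕.gradInner f g) h p
      = 𝓕.hess f p (𝓕.pderiv · h p) (𝓕.pderiv · g p)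
        + 𝓕.hess g p (𝓕.pderiv · h p) (𝓕.pderiv · f p) := by
  rw [gradInner, form, hess, hess, ← Finset.sum_add_distrib]
  refine Finset.sum_congr rfl fun a _ => ?_
  rw [𝓕.pderiv_gradInner hf hg, Finset.sum_mul, Finset.mul_sum, ← Finset.sum_add_distrib]
  exact Finset.sum_congr rfl fun b _ => by ring

lemma gradInner_gradInner_self (hf : ContDiff ℝ 2 f) (h : E → ℝ) (p : E) :
    𝓕.gradInner (𝓕.gradInner f f) h p
      = 2 * 𝓕.hess f p (𝓕.pderiv · h p) (𝓕.pderiv · f p) := by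
  rw [𝓕.gradInner_gradInner hf hf, two_mul]

lemma hess_exp (hf : ContDiff ℝ 2 f) (p : E) (ξ η : ι → ℝ) :
    𝓕.hess (fun x => exp (f x)) p ξ η
      = exp (f p) * (𝓕.hess f p ξ η
        + 𝓕.form (𝓕.pderiv · f p) ξ * 𝓕.form (𝓕.pderiv · f p) η) := by
  have hfd : Differentiable ℝ f := hf.differentiable two_ne_zero
  have pderiv_pderiv_exp : ∀ a b, 𝓕.pderiv a (𝓕.pderiv b fun x => exp (f x)) p
      = exp (f p) * (𝓕.pderiv a (𝓕.pderiv b f) p + 𝓕.pderiv a f p * 𝓕.pderiv b f p) := by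
    intro a b
    rw [funext fun x => 𝓕.pderiv_exp (hfd x) b,
      𝓕.pderiv_mul (hfd p).exp (𝓕.differentiable_pderiv hf b p), 𝓕.pderiv_exp (hfd p)]
    ring
  rw [hess, hess, form, form, Finset.sum_mul_sum, ← Finset.sum_add_distrib, Finset.mul_sum]
  refine Finset.sum_congr rfl fun a _ => ?_
  rw [← Finset.sum_add_distrib, Finset.mul_sum]
  refine Finset.sum_congr rfl fun b _ => ?_
  rw [pderiv_pderiv_exp]
  ring

lemma gradInner_exp_const_mul_self (hf : DifferentiableAt ℝ f p) (l : ℝ) :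
    𝓕.gradInner (fun x => exp (l * f x)) (fun x => exp (l * f x)) p
      = (l * exp (l * f p)) ^ 2 * 𝓕.gradInner f f p := by
  simp only [gradInner, form, 𝓕.pderiv_exp_const_mul hf, Finset.mul_sum]
  exact Finset.sum_congr rfl fun a _ => by ring

lemma hess_exp_const_mul_self (hf : ContDiff ℝ 2 f) (l : ℝ) (p : E) (ξ : ι → ℝ) :
    𝓕.hess (fun x => exp (l * f x)) p ξ ξ
      = l * exp (l * f p) * (𝓕.hess f p ξ ξ + l * 𝓕.form (𝓕.pderiv · f p) ξ ^ 2) := by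
  simp only [𝓕.hess_exp (contDiff_const.mul hf), 𝓕.hess_const_mul hf,
    𝓕.pderiv_const_mul (hf.differentiable two_ne_zero p), form_smul_left]
  ring

lemma hess_exp_const_mul_pderiv (hf : ContDiff ℝ 2 f) (l : ℝ) (p : E) :
    𝓕.hess (fun x => exp (l * f x)) p (𝓕.pderiv · (fun x => exp (l * f x)) p)
        (𝓕.pderiv · (fun x => exp (l * f x)) p)
      = (l * exp (l * f p)) ^ 3 * (𝓕.hess f p (𝓕.pderiv · f p) (𝓕.pderiv · f p)
        + l * 𝓕.gradInner f f p ^ 2) := by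
  simp only [𝓕.hess_exp_const_mul_self hf,
    𝓕.pderiv_exp_const_mul (hf.differentiable two_ne_zero p), hess_smul_smul,
    𝓕.form_comm _ fun a => l * exp (l * f p) * 𝓕.pderiv a f p, form_smul_left, gradInner]
  ring

lemma div_add {J K : ι → E → ℝ} (hJ : ∀ a, DifferentiableAt ℝ (J a) p)
    (hK : ∀ a, DifferentiableAt ℝ (K a) p) :
    𝓕.div (fun a x => J a x + K a x) p = 𝓕.div J p + 𝓕.div K p := by
  simp only [div, 𝓕.pderiv_add (hJ _) (hK _), Finset.sum_add_distrib]

lemma div_mul_grad (hf : DifferentiableAt ℝ f p) (hg : ContDiff ℝ 2 g) :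
    𝓕.div (fun a x => f x * 𝓕.grad g a x) p = 𝓕.gradInner f g p + f p * 𝓕.box g p := by
  simp only [div, box, gradInner, form, Finset.mul_sum, ← Finset.sum_add_distrib]
  refine Finset.sum_congr rfl fun a _ => ?_
  rw [𝓕.pderiv_mul hf ((𝓕.contDiff_one_grad hg a).differentiable one_ne_zero p), grad]
  ring

lemma box_exp_mul (hf : ContDiff ℝ 2 f) (hg : ContDiff ℝ 2 g) (p : E) :
    𝓕.box (fun x => exp (f x) * g x) p = exp (f p) * (𝓕.box g p + 2 * 𝓕.gradInner f g p
      + (𝓕.box f p + 𝓕.gradInner f f p) * g p) := by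
  have hfd : Differentiable ℝ f := hf.differentiable two_ne_zero
  have hgd : Differentiable ℝ g := hg.differentiable two_ne_zero
  have hgrad {k : E → ℝ} (hk : ContDiff ℝ 2 k) (a : ι) : Differentiable ℝ (𝓕.grad k a) :=
    (𝓕.contDiff_one_grad hk a).differentiable one_ne_zero
  have grad_exp_mul : 𝓕.grad (fun x => exp (f x) * g x)
      = fun a x => exp (f x) * 𝓕.grad g a x + exp (f x) * g x * 𝓕.grad f a x := by
    funext a x
    rw [grad, 𝓕.pderiv_mul (hfd x).exp (hgd x), 𝓕.pderiv_exp (hfd x), grad, grad]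
    ring
  have hexpg := (hfd p).exp.fun_mul (hgd p)
  rw [box, grad_exp_mul, 𝓕.div_add (fun a => (hfd p).exp.fun_mul (hgrad hg a p))
      (fun a => hexpg.fun_mul (hgrad hf a p)), 𝓕.div_mul_grad (hfd p).exp hg,
    𝓕.div_mul_grad hexpg hf, 𝓕.gradInner_mul_left (hfd p).exp (hgd p),
    𝓕.gradInner_exp_left (hfd p), 𝓕.gradInner_exp_left (hfd p), 𝓕.gradInner_comm g f]
  ring

/-- The conjugated operator `exp (s φ) □ exp (-s φ)`. -/
noncomputable def conjBox (s : ℝ) (φ w : E → ℝ) (p : E) : ℝ :=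
  𝓕.box w p - 2 * s * 𝓕.gradInner φ w p
    + (s ^ 2 * 𝓕.gradInner φ φ p - s * 𝓕.box φ p) * w p

lemma continuous_conjBox (hf : ContDiff ℝ 2 f) (hg : ContDiff ℝ 2 g) (s : ℝ) :
    Continuous (𝓕.conjBox s f g) := by
  have := 𝓕.continuous_box hf
  have := 𝓕.continuous_box hg
  have := (𝓕.contDiff_one_gradInner hf hg).continuous
  have := (𝓕.contDiff_one_gradInner hf hf).continuous
  have := hg.continuous
  unfold conjBox
  fun_prop

lemma exp_mul_box (hf : ContDiff ℝ 2 f) (hg : ContDiff ℝ 2 g) (s : ℝ) (p : E) :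
    exp (s * f p) * 𝓕.box g p = 𝓕.conjBox s f (fun x => exp (s * f x) * g x) p := by
  have hfd : Differentiable ℝ f := hf.differentiable two_ne_zero
  have hsf : ContDiff ℝ 2 fun x => s * f x := contDiff_const.mul hf
  have hsfd : Differentiable ℝ fun x => s * f x := hfd.const_mul s
  have gradInner_smul (k : E → ℝ) : 𝓕.gradInner (fun x => s * f x) k p = s * 𝓕.gradInner f k p :=
    𝓕.gradInner_const_mul_left (hfd p) s k
  rw [conjBox, 𝓕.box_exp_mul hsf hg, 𝓕.gradInner_comm f fun x => exp (s * f x) * g x,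
    𝓕.gradInner_mul_left (hsfd p).exp (hg.differentiable two_ne_zero p),
    𝓕.gradInner_exp_left (hsfd p), gradInner_smul, gradInner_smul,
    𝓕.gradInner_comm f fun x => s * f x, gradInner_smul, 𝓕.box_const_mul hf, 𝓕.gradInner_comm g f]
  ring

/-- The first-order multiplier `2 ⟨∇Φ, ∇w⟩ + θ w` against which `□w + Q w` is integrated. -/
noncomputable def multiplier (Φ θ w : E → ℝ) (p : E) : ℝ := 2 * 𝓕.gradInner Φ w p + θ p * w p

/-- The flux arising when `(□w + Q w) (2 ⟨∇Φ, ∇w⟩ + θ w)` is written in divergence form. -/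
noncomputable def flux (Φ θ Q w : E → ℝ) (a : ι) (p : E) : ℝ :=
  𝓕.multiplier Φ θ w p * 𝓕.grad w a p + -1 / 2 * (w p * w p) * 𝓕.grad θ a p
    + (Q p * (w p * w p) - 𝓕.gradInner w w p) * 𝓕.grad Φ a p

lemma conjBox_eq_sub_multiplier (s : ℝ) (φ θ w : E → ℝ) (p : E) :
    𝓕.conjBox s φ w p = 𝓕.box w p + s ^ 2 * 𝓕.gradInner φ φ p * w p
      - s * 𝓕.multiplier φ θ w p + s * (θ p - 𝓕.box φ p) * w p := by
  rw [conjBox, multiplier]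
  ring

section Flux

variable {Φ θ Q w : E → ℝ}

lemma contDiff_one_multiplier (hΦ : ContDiff ℝ 2 Φ) (hθ : ContDiff ℝ 2 θ)
    (hw : ContDiff ℝ 2 w) : ContDiff ℝ 1 (𝓕.multiplier Φ θ w) :=
  (contDiff_const.mul (𝓕.contDiff_one_gradInner hΦ hw)).add ((hθ.mul hw).of_le one_le_two)

lemma contDiff_one_flux (hΦ : ContDiff ℝ 2 Φ) (hθ : ContDiff ℝ 2 θ) (hQ : ContDiff ℝ 1 Q)
    (hw : ContDiff ℝ 2 w) (a : ι) : ContDiff ℝ 1 (𝓕.flux Φ θ Q w a) := by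
  have hw₁ : ContDiff ℝ 1 w := hw.of_le one_le_two
  exact (((𝓕.contDiff_one_multiplier hΦ hθ hw).mul (𝓕.contDiff_one_grad hw a)).add
    ((contDiff_const.mul (hw₁.mul hw₁)).mul (𝓕.contDiff_one_grad hθ a))).add
    (((hQ.mul (hw₁.mul hw₁)).sub (𝓕.contDiff_one_gradInner hw hw)).mul
      (𝓕.contDiff_one_grad hΦ a))

/-- The mixed terms `hess w (∇w) (∇Φ)` coming from the first and the last summand of the flux
cancel; this is why only derivatives of `w` of order one survive on the right. -/
lemma div_flux (hΦ : ContDiff ℝ 2 Φ) (hθ : ContDiff ℝ 2 θ) (hQ : ContDiff ℝ 1 Q)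
    (hw : ContDiff ℝ 2 w) (p : E) :
    𝓕.div (𝓕.flux Φ θ Q w) p
      = (𝓕.box w p + Q p * w p) * 𝓕.multiplier Φ θ w p
        + 2 * 𝓕.hess Φ p (𝓕.pderiv · w p) (𝓕.pderiv · w p)
        + (θ p - 𝓕.box Φ p) * 𝓕.gradInner w w p
        + (𝓕.gradInner Q Φ p - Q p * (θ p - 𝓕.box Φ p)) * w p ^ 2
        - 𝓕.box θ p / 2 * w p ^ 2 := by
  have hwd := hw.differentiable two_ne_zero p
  have hθd := hθ.differentiable two_ne_zero p
  have hQd := hQ.differentiable one_ne_zero p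
  have hww : DifferentiableAt ℝ (fun x => w x * w x) p := hwd.fun_mul hwd
  have hΓΦ := (𝓕.contDiff_one_gradInner hΦ hw).differentiable one_ne_zero p
  have hΓw := (𝓕.contDiff_one_gradInner hw hw).differentiable one_ne_zero p
  have hA := (𝓕.contDiff_one_multiplier hΦ hθ hw).differentiable one_ne_zero p
  have hB : DifferentiableAt ℝ (fun x => -1 / 2 * (w x * w x)) p := hww.const_mul _
  have hC : DifferentiableAt ℝ (fun x => Q x * (w x * w x) - 𝓕.gradInner w w x) p :=
    (hQd.fun_mul hww).fun_sub hΓw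
  have hgrad {k : E → ℝ} (hk : ContDiff ℝ 2 k) (a : ι) : DifferentiableAt ℝ (𝓕.grad k a) p :=
    (𝓕.contDiff_one_grad hk a).differentiable one_ne_zero p
  have gradInner_A : 𝓕.gradInner (𝓕.multiplier Φ θ w) w p
      = 2 * (𝓕.hess Φ p (𝓕.pderiv · w p) (𝓕.pderiv · w p)
          + 𝓕.hess w p (𝓕.pderiv · w p) (𝓕.pderiv · Φ p))
        + (θ p * 𝓕.gradInner w w p + w p * 𝓕.gradInner θ w p) := by
    unfold multiplier
    rw [𝓕.gradInner_add_left (hΓΦ.const_mul 2) (hθd.fun_mul hwd),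
      𝓕.gradInner_const_mul_left hΓΦ, 𝓕.gradInner_gradInner hΦ hw,
      𝓕.gradInner_mul_left hθd hwd]
  have gradInner_B : 𝓕.gradInner (fun x => -1 / 2 * (w x * w x)) θ p
      = -(w p * 𝓕.gradInner θ w p) := by
    rw [𝓕.gradInner_const_mul_left hww, 𝓕.gradInner_mul_left hwd hwd, 𝓕.gradInner_comm w θ]
    ring
  have gradInner_C : 𝓕.gradInner (fun x => Q x * (w x * w x) - 𝓕.gradInner w w x) Φ p
      = 𝓕.gradInner Q Φ p * w p ^ 2 + 2 * Q p * w p * 𝓕.gradInner Φ w p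
        - 2 * 𝓕.hess w p (𝓕.pderiv · w p) (𝓕.pderiv · Φ p) := by
    rw [𝓕.gradInner_sub_left (hQd.fun_mul hww) hΓw, 𝓕.gradInner_mul_left hQd hww,
      𝓕.gradInner_mul_left hwd hwd, 𝓕.gradInner_gradInner_self hw, 𝓕.hess_comm hw,
      𝓕.gradInner_comm w Φ]
    ring
  unfold flux
  rw [𝓕.div_add (fun a => (hA.fun_mul (hgrad hw a)).fun_add (hB.fun_mul (hgrad hθ a)))
      (fun a => hC.fun_mul (hgrad hΦ a)),
    𝓕.div_add (fun a => hA.fun_mul (hgrad hw a)) (fun a => hB.fun_mul (hgrad hθ a)),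
    𝓕.div_mul_grad hA hw, 𝓕.div_mul_grad hB hθ, 𝓕.div_mul_grad hC hΦ,
    gradInner_A, gradInner_B, gradInner_C, multiplier]
  ring

end Flux

end WeightedFrame

/-! ### Minkowski space -/

/-- Spacetime `ℝⁿ × ℝ`, with the time variable last. -/
abbrev Spacetime (n : ℕ) := EuclideanSpace ℝ (Fin n) × ℝ

/-- The coordinate frame of spacetime for which `box` is the wave operator `∂ₜ² - Δ`. The index
`none` stands for time and `some i` for the `i`-th space variable. -/
noncomputable def minkowski (n : ℕ) : WeightedFrame (Option (Fin n)) (Spacetime n) where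
  dir a := a.elim (0, 1) fun i => (EuclideanSpace.single i 1, 0)
  coeff a := a.elim 1 fun _ => -1

section Minkowski

variable {n : ℕ} {f φ w : Spacetime n → ℝ} {x : EuclideanSpace ℝ (Fin n)} {t : ℝ}

lemma hasDerivAt_pderiv_none (hf : DifferentiableAt ℝ f (x, t)) :
    HasDerivAt (fun r => f (x, r)) ((minkowski n).pderiv none f (x, t)) t :=
  hf.hasFDerivAt.comp_hasDerivAt t ((hasDerivAt_const t x).prodMk (hasDerivAt_id t))

lemma fderiv_slice_single (hf : DifferentiableAt ℝ f (x, t)) (i : Fin n) :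
    fderiv ℝ (fun y => f (y, t)) x (EuclideanSpace.single i 1)
      = (minkowski n).pderiv (some i) f (x, t) := by
  have hslice : HasFDerivAt (fun y => f (y, t))
      ((fderiv ℝ f (x, t)).comp (ContinuousLinearMap.inl ℝ _ ℝ)) x :=
    hf.hasFDerivAt.comp x (hasFDerivAt_prodMk_left x t)
  rw [hslice.fderiv]
  rfl

lemma form_minkowski (ξ η : Option (Fin n) → ℝ) :
    (minkowski n).form ξ η = ξ none * η none - ∑ i, ξ (some i) * η (some i) := by
  simp [WeightedFrame.form, minkowski, Fintype.sum_option, sub_eq_add_neg]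

lemma box_minkowski (hf : ContDiff ℝ 2 f) (p : Spacetime n) :
    (minkowski n).box f p = (minkowski n).pderiv none ((minkowski n).pderiv none f) p
      - ∑ i, (minkowski n).pderiv (some i) ((minkowski n).pderiv (some i) f) p := by
  rw [WeightedFrame.box_eq_sum _ hf, Fintype.sum_option]
  simp [minkowski, sub_eq_add_neg]

/-- The weight `φ + τ t`. The linear term makes the flux through the initial time slice control
the initial velocity. -/
def tilt (τ : ℝ) (φ : Spacetime n → ℝ) (p : Spacetime n) : ℝ := φ p + τ * p.2

lemma contDiff_tilt (hφ : ContDiff ℝ 2 φ) (τ : ℝ) : ContDiff ℝ 2 (tilt τ φ) :=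
  hφ.add (contDiff_const.mul contDiff_snd)

lemma pderiv_tilt (hφ : ContDiff ℝ 2 φ) (τ : ℝ) (a : Option (Fin n)) (p : Spacetime n) :
    (minkowski n).pderiv a (tilt τ φ) p
      = (minkowski n).pderiv a φ p + τ * ((minkowski n).dir a).2 := by
  have hsnd : (minkowski n).pderiv a Prod.snd p = ((minkowski n).dir a).2 := by
    rw [WeightedFrame.pderiv, fderiv_snd]
    rfl
  unfold tilt
  rw [WeightedFrame.pderiv_add _ (hφ.differentiable two_ne_zero p)
      (differentiableAt_snd.const_mul τ), WeightedFrame.pderiv_const_mul _ differentiableAt_snd,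
    hsnd]

lemma pderiv_pderiv_tilt (hφ : ContDiff ℝ 2 φ) (τ : ℝ) (a b : Option (Fin n)) (p : Spacetime n) :
    (minkowski n).pderiv a ((minkowski n).pderiv b (tilt τ φ)) p
      = (minkowski n).pderiv a ((minkowski n).pderiv b φ) p := by
  rw [funext (pderiv_tilt hφ τ b), WeightedFrame.pderiv_add _
    ((minkowski n).differentiable_pderiv hφ b p) (differentiableAt_const _),
    WeightedFrame.pderiv_const, add_zero]

lemma hess_tilt (hφ : ContDiff ℝ 2 φ) (τ : ℝ) (p : Spacetime n) (ξ η : Option (Fin n) → ℝ) :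
    (minkowski n).hess (tilt τ φ) p ξ η = (minkowski n).hess φ p ξ η := by
  simp only [WeightedFrame.hess, pderiv_pderiv_tilt hφ]

lemma box_tilt (hφ : ContDiff ℝ 2 φ) (τ : ℝ) (p : Spacetime n) :
    (minkowski n).box (tilt τ φ) p = (minkowski n).box φ p := by
  simp only [WeightedFrame.box_eq_sum _ (contDiff_tilt hφ τ), WeightedFrame.box_eq_sum _ hφ,
    pderiv_pderiv_tilt hφ]

lemma gradInner_tilt_left (hφ : ContDiff ℝ 2 φ) (τ : ℝ) (f : Spacetime n → ℝ) (p : Spacetime n) :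
    (minkowski n).gradInner (tilt τ φ) f p
      = (minkowski n).gradInner φ f p + τ * (minkowski n).pderiv none f p := by
  simp only [WeightedFrame.gradInner, form_minkowski, pderiv_tilt hφ]
  simp only [minkowski, Option.elim]
  ring_nf

/-- The squared Euclidean norm of the spacetime gradient `(∂ₜ f, ∇ f)`. -/
noncomputable def gradSq (f : Spacetime n → ℝ) (p : Spacetime n) : ℝ :=
  ∑ a, (minkowski n).pderiv a f p ^ 2

lemma gradSq_eq_add_sum (f : Spacetime n → ℝ) (p : Spacetime n) :
    gradSq f p = (minkowski n).pderiv none f p ^ 2 + ∑ i, (minkowski n).pderiv (some i) f p ^ 2 :=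
  Fintype.sum_option _

lemma sq_pderiv_le_gradSq (f : Spacetime n → ℝ) (p : Spacetime n) (a : Option (Fin n)) :
    (minkowski n).pderiv a f p ^ 2 ≤ gradSq f p :=
  Finset.single_le_sum (f := fun a => (minkowski n).pderiv a f p ^ 2)
    (fun _ _ => sq_nonneg _) (Finset.mem_univ a)

lemma continuous_gradSq (hf : ContDiff ℝ 2 f) : Continuous (gradSq f) :=
  continuous_finsetSum _ fun a _ => ((minkowski n).contDiff_one_pderiv hf a).continuous.pow 2

end Minkowski

/-! ### Pointwise Carleman inequality -/

/-- At the point `p` the covector forms entering `WeightedFrame.div_flux` are positive with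
constant `c`: on all covectors for the coefficient of `∇w`, and on `∇φ` for that of `w²`. -/
structure IsPseudoconvexAt {n : ℕ} (c : ℝ) (φ θ : Spacetime n → ℝ) (p : Spacetime n) : Prop where
  le_hess : ∀ ξ : Option (Fin n) → ℝ, c * ∑ a, ξ a ^ 2 ≤ 2 * (minkowski n).hess φ p ξ ξ
    + (θ p - (minkowski n).box φ p) * (minkowski n).form ξ ξ
  le_hess_grad : c ≤ 2 * (minkowski n).hess φ p ((minkowski n).pderiv · φ p)
      ((minkowski n).pderiv · φ p)
    - (θ p - (minkowski n).box φ p) * (minkowski n).gradInner φ φ p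

/-- At the point `p` the quantities of the weights `φ`, `θ` that enter the error terms are bounded
by `B`. -/
structure CoefficientBoundAt {n : ℕ} (B : ℝ) (φ θ : Spacetime n → ℝ) (p : Spacetime n) :
    Prop where
  pderiv_gradInner : |(minkowski n).pderiv none ((minkowski n).gradInner φ φ) p| ≤ B
  box_multiplier : |(minkowski n).box θ p| ≤ B
  multiplier_sub_box : |θ p - (minkowski n).box φ p| ≤ B
  multiplier : |θ p| ≤ B
  pderiv_multiplier : |(minkowski n).pderiv none θ p| ≤ B
  gradSq : gradSq φ p ≤ B

/-- The parameter `s` is large enough, and the tilt `τ` of the right size, for the error terms of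
the Carleman estimate to be absorbed. -/
structure AdmissibleParameters (c B m s τ : ℝ) : Prop where
  pos : 0 < s
  tilt_pos : 0 < τ
  tilt_sq : 4 * s * τ ^ 2 ≤ c
  tilt_le : τ ≤ c
  flux : B ^ 2 / (4 * c) + B / 2 ≤ 4 * c ^ 3 * s ^ 2
  bulk : 2 * s ^ 3 * τ * B + s * B + 4 * s ^ 2 * B ^ 2 + 4 * m ^ 2 ≤ s ^ 3 * c

section Pointwise

variable {n : ℕ} {φ θ w : Spacetime n → ℝ} {p : Spacetime n} {c B m s τ : ℝ}

/-- The flux of the tilted weight, with potential `s² gradInner φ φ`. -/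
noncomputable def carlemanFlux (s τ : ℝ) (φ θ w : Spacetime n → ℝ) :
    Option (Fin n) → Spacetime n → ℝ :=
  (minkowski n).flux (tilt τ φ) θ (fun p => s ^ 2 * (minkowski n).gradInner φ φ p) w

lemma contDiff_one_carlemanFlux (hφ : ContDiff ℝ 2 φ) (hθ : ContDiff ℝ 2 θ)
    (hw : ContDiff ℝ 2 w) (a : Option (Fin n)) : ContDiff ℝ 1 (carlemanFlux s τ φ θ w a) :=
  (minkowski n).contDiff_one_flux (contDiff_tilt hφ τ) hθ
    (contDiff_const.mul ((minkowski n).contDiff_one_gradInner hφ hφ)) hw a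

lemma le_div_carlemanFlux (hφ : ContDiff ℝ 2 φ) (hθ : ContDiff ℝ 2 θ) (hw : ContDiff ℝ 2 w)
    (hconv : IsPseudoconvexAt c φ θ p) (hB : CoefficientBoundAt B φ θ p) (hτ : 0 ≤ τ) :
    ((minkowski n).box w p + s ^ 2 * (minkowski n).gradInner φ φ p * w p)
          * ((minkowski n).multiplier φ θ w p + 2 * τ * (minkowski n).pderiv none w p)
        + c * gradSq w p + (s ^ 2 * c - s ^ 2 * τ * B - B / 2) * w p ^ 2
      ≤ (minkowski n).div (carlemanFlux s τ φ θ w) p := by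
  have hG : DifferentiableAt ℝ ((minkowski n).gradInner φ φ) p :=
    ((minkowski n).contDiff_one_gradInner hφ hφ).differentiable one_ne_zero p
  have gradInner_potential : (minkowski n).gradInner
        (fun p => s ^ 2 * (minkowski n).gradInner φ φ p) (tilt τ φ) p
      = s ^ 2 * (2 * (minkowski n).hess φ p ((minkowski n).pderiv · φ p)
          ((minkowski n).pderiv · φ p)
        + τ * (minkowski n).pderiv none ((minkowski n).gradInner φ φ) p) := by
    rw [(minkowski n).gradInner_const_mul_left hG, (minkowski n).gradInner_comm,
      gradInner_tilt_left hφ, (minkowski n).gradInner_comm φ,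
      (minkowski n).gradInner_gradInner_self hφ]
  rw [carlemanFlux, (minkowski n).div_flux (contDiff_tilt hφ τ) hθ
    (contDiff_const.mul ((minkowski n).contDiff_one_gradInner hφ hφ)) hw, gradInner_potential,
    box_tilt hφ, hess_tilt hφ, WeightedFrame.multiplier, WeightedFrame.multiplier,
    gradInner_tilt_left hφ]
  have bulk_grad := hconv.le_hess ((minkowski n).pderiv · w p)
  have bulk_zero := mul_le_mul_of_nonneg_left hconv.le_hess_grad
    (mul_nonneg (sq_nonneg s) (sq_nonneg (w p)))
  have error_tilt := mul_le_mul_of_nonneg_left (abs_le.1 hB.pderiv_gradInner).1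
    (mul_nonneg (mul_nonneg (sq_nonneg s) hτ) (sq_nonneg (w p)))
  have error_box := mul_le_mul_of_nonneg_left (abs_le.1 hB.box_multiplier).2 (sq_nonneg (w p))
  change c * gradSq w p ≤ _ + _ * (minkowski n).gradInner w w p at bulk_grad
  linarith

/-- Completing the square in `(P - s A)² + 2 s P (A + 2 τ wₜ)` costs only `4 s² τ² wₜ²`. -/
lemma neg_sq_le_sq_sub_add_mul (s τ P A v : ℝ) :
    -(4 * s ^ 2 * τ ^ 2 * v ^ 2) ≤ (P - s * A) ^ 2 + 2 * s * (P * (A + 2 * τ * v)) := by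
  nlinarith [sq_nonneg (P + 2 * s * τ * v), sq_nonneg (s * A)]

lemma le_sq_conjBox_add_mul (hφ : ContDiff ℝ 2 φ) (hθ : ContDiff ℝ 2 θ) (hw : ContDiff ℝ 2 w)
    (hconv : IsPseudoconvexAt c φ θ p) (hB : CoefficientBoundAt B φ θ p)
    (hs : AdmissibleParameters c B m s τ) {q : ℝ} (hq : |q| ≤ m) :
    s * c * gradSq w p + s ^ 3 * c * w p ^ 2
        - 2 * s * (minkowski n).div (carlemanFlux s τ φ θ w) p
      ≤ 2 * ((minkowski n).conjBox s φ w p + q * w p) ^ 2 := by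
  rw [(minkowski n).conjBox_eq_sub_multiplier s φ θ]
  have hdiv := mul_le_mul_of_nonneg_left (le_div_carlemanFlux (s := s) hφ hθ hw hconv hB
    hs.tilt_pos.le) (mul_nonneg zero_le_two hs.pos.le)
  set P := (minkowski n).box w p + s ^ 2 * (minkowski n).gradInner φ φ p * w p
  set A := (minkowski n).multiplier φ θ w p
  set γ := θ p - (minkowski n).box φ p
  set v := (minkowski n).pderiv none w p
  have hcross := neg_sq_le_sq_sub_add_mul s τ P A v
  have tilt_term : 4 * s ^ 2 * τ ^ 2 * v ^ 2 ≤ s * c * gradSq w p :=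
    calc 4 * s ^ 2 * τ ^ 2 * v ^ 2 = s * (4 * s * τ ^ 2) * v ^ 2 := by ring
      _ ≤ s * c * v ^ 2 := by gcongr; exacts [hs.pos.le, hs.tilt_sq]
      _ ≤ s * c * gradSq w p := by
        have hc : 0 ≤ c := hs.tilt_pos.le.trans hs.tilt_le
        have := hs.pos.le
        gcongr
        exact sq_pderiv_le_gradSq w p none
  have lower_order : (s * γ + q) ^ 2 * w p ^ 2 ≤ (2 * s ^ 2 * B ^ 2 + 2 * m ^ 2) * w p ^ 2 := by
    have hγ : γ ^ 2 ≤ B ^ 2 := sq_le_sq' (abs_le.1 hB.multiplier_sub_box).1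
      (abs_le.1 hB.multiplier_sub_box).2
    have hq' : q ^ 2 ≤ m ^ 2 := sq_le_sq' (abs_le.1 hq).1 (abs_le.1 hq).2
    gcongr
    nlinarith [sq_nonneg (s * γ - q), mul_le_mul_of_nonneg_left hγ (sq_nonneg s)]
  have principal : (P - s * A) ^ 2 ≤ 2 * (P - s * A + s * γ * w p + q * w p) ^ 2
      + 2 * ((s * γ + q) ^ 2 * w p ^ 2) := by
    nlinarith [sq_nonneg (P - s * A + 2 * (s * γ + q) * w p)]
  have hbulk := mul_le_mul_of_nonneg_right hs.bulk (sq_nonneg (w p))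
  linarith

end Pointwise

section TimeSlices

variable {n : ℕ} {φ θ w : Spacetime n → ℝ} {p : Spacetime n} {c B m s τ : ℝ}

lemma carlemanFlux_none (hφ : ContDiff ℝ 2 φ) :
    carlemanFlux s τ φ θ w none p
      = ((minkowski n).pderiv none φ p + τ) * gradSq w p
        - 2 * (minkowski n).pderiv none w p
          * ∑ i, (minkowski n).pderiv (some i) φ p * (minkowski n).pderiv (some i) w p
        + θ p * (w p * (minkowski n).pderiv none w p)
        - (minkowski n).pderiv none θ p / 2 * w p ^ 2
        + s ^ 2 * (minkowski n).gradInner φ φ p * ((minkowski n).pderiv none φ p + τ)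
          * w p ^ 2 := by
  have gradInner_self : (minkowski n).gradInner w w p
      = 2 * (minkowski n).pderiv none w p ^ 2 - gradSq w p := by
    simp only [WeightedFrame.gradInner, form_minkowski, gradSq_eq_add_sum, sq]
    ring
  have grad_none (f : Spacetime n → ℝ) :
      (minkowski n).grad f none p = (minkowski n).pderiv none f p := one_mul _
  have dir_none : ((minkowski n).dir none).2 = 1 := rfl
  rw [carlemanFlux, WeightedFrame.flux, WeightedFrame.multiplier, gradInner_tilt_left hφ,
    gradInner_self, grad_none, grad_none, grad_none, pderiv_tilt hφ, dir_none,
    WeightedFrame.gradInner, form_minkowski]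
  ring

lemma carlemanFlux_none_of_eq_zero (hφ : ContDiff ℝ 2 φ) (hw : w p = 0)
    (hwx : ∀ i, (minkowski n).pderiv (some i) w p = 0)
    (hφt : (minkowski n).pderiv none φ p = 0) :
    carlemanFlux s τ φ θ w none p = τ * (minkowski n).pderiv none w p ^ 2 := by
  simp [carlemanFlux_none hφ, gradSq_eq_add_sum, hw, hwx, hφt]

lemma two_mul_abs_mul_inner_le {N u : ℝ} {ζ η : Fin n → ℝ} (hN : √(∑ i, ζ i ^ 2) ≤ N) :
    |2 * u * ∑ i, ζ i * η i| ≤ N * (u ^ 2 + ∑ i, η i ^ 2) := by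
  have cauchy_schwarz : |∑ i, ζ i * η i| ≤ N * √(∑ i, η i ^ 2) := by
    refine (abs_le_sqrt (Finset.sum_mul_sq_le_sq_mul_sq Finset.univ ζ η)).trans ?_
    rw [sqrt_mul (Finset.sum_nonneg fun i _ => sq_nonneg (ζ i))]
    gcongr
  have hη := sq_sqrt (Finset.sum_nonneg fun i (_ : i ∈ Finset.univ) => sq_nonneg (η i))
  have hN₀ : 0 ≤ N := (sqrt_nonneg _).trans hN
  calc |2 * u * ∑ i, ζ i * η i| = 2 * |u| * |∑ i, ζ i * η i| := by
        rw [abs_mul, abs_mul, abs_two]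
    _ ≤ 2 * |u| * (N * √(∑ i, η i ^ 2)) := by gcongr
    _ = N * (2 * |u| * √(∑ i, η i ^ 2)) := by ring
    _ ≤ N * (|u| ^ 2 + √(∑ i, η i ^ 2) ^ 2) := by
        gcongr
        exact two_mul_le_add_sq _ _
    _ = N * (u ^ 2 + ∑ i, η i ^ 2) := by rw [sq_abs, hη]

lemma final_kinetic_le (hτ : τ ≤ c)
    (hφt : √(∑ i, (minkowski n).pderiv (some i) φ p ^ 2) + 2 * c
      ≤ -(minkowski n).pderiv none φ p) (hc : 0 ≤ c) (w : Spacetime n → ℝ) :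
    ((minkowski n).pderiv none φ p + τ) * gradSq w p
        - 2 * (minkowski n).pderiv none w p
          * ∑ i, (minkowski n).pderiv (some i) φ p * (minkowski n).pderiv (some i) w p
      ≤ -(c * (minkowski n).pderiv none w p ^ 2) := by
  set N := √(∑ i, (minkowski n).pderiv (some i) φ p ^ 2) with hN
  have hu := sq_pderiv_le_gradSq w p none
  have cross := (abs_le.1 (two_mul_abs_mul_inner_le (u := (minkowski n).pderiv none w p)
    (η := fun i => (minkowski n).pderiv (some i) w p) hN.ge)).1
  rw [← gradSq_eq_add_sum] at cross
  have main : ((minkowski n).pderiv none φ p + τ) * gradSq w p ≤ -(N + c) * gradSq w p :=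
    mul_le_mul_of_nonneg_right (by linarith) ((sq_nonneg _).trans hu)
  linarith [mul_le_mul_of_nonneg_left hu hc]

lemma final_potential_le (hτ : τ ≤ c)
    (hφt : √(∑ i, (minkowski n).pderiv (some i) φ p ^ 2) + 2 * c
      ≤ -(minkowski n).pderiv none φ p) (hc : 0 ≤ c) (s : ℝ) :
    s ^ 2 * (minkowski n).gradInner φ φ p * ((minkowski n).pderiv none φ p + τ)
      ≤ -(4 * c ^ 3 * s ^ 2) := by
  have hN := sqrt_nonneg (∑ i, (minkowski n).pderiv (some i) φ p ^ 2)
  have gradInner_ge : 4 * c ^ 2 ≤ (minkowski n).gradInner φ φ p := by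
    have hN_sq := sq_sqrt (Finset.sum_nonneg
      fun i (_ : i ∈ Finset.univ) => sq_nonneg ((minkowski n).pderiv (some i) φ p))
    rw [WeightedFrame.gradInner, form_minkowski]
    simp only [← sq]
    nlinarith
  have hφτ : c ≤ -((minkowski n).pderiv none φ p + τ) := by linarith
  nlinarith [mul_le_mul_of_nonneg_left (mul_le_mul gradInner_ge hφτ hc
    ((by positivity : 0 ≤ 4 * c ^ 2).trans gradInner_ge)) (sq_nonneg s)]

lemma carlemanFlux_none_nonpos (hφ : ContDiff ℝ 2 φ) (hB : CoefficientBoundAt B φ θ p)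
    (hs : AdmissibleParameters c B m s τ)
    (hφt : √(∑ i, (minkowski n).pderiv (some i) φ p ^ 2) + 2 * c
      ≤ -(minkowski n).pderiv none φ p) :
    carlemanFlux s τ φ θ w none p ≤ 0 := by
  have hc : 0 < c := hs.tilt_pos.trans_le hs.tilt_le
  rw [carlemanFlux_none hφ]
  have kinetic := final_kinetic_le hs.tilt_le hφt hc.le w
  have potential := mul_le_mul_of_nonneg_right (final_potential_le hs.tilt_le hφt hc.le s)
    (sq_nonneg (w p))
  set u := (minkowski n).pderiv none w p
  have mixed : θ p * (w p * u) ≤ c * u ^ 2 + B ^ 2 / (4 * c) * w p ^ 2 := by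
    have hθ : θ p ^ 2 ≤ B ^ 2 := sq_le_sq' (abs_le.1 hB.multiplier).1 (abs_le.1 hB.multiplier).2
    calc θ p * (w p * u)
        = c * u ^ 2 + θ p ^ 2 / (4 * c) * w p ^ 2 - c * (u - θ p * w p / (2 * c)) ^ 2 := by
          field_simp
          ring
      _ ≤ c * u ^ 2 + θ p ^ 2 / (4 * c) * w p ^ 2 := sub_le_self _ (by positivity)
      _ ≤ c * u ^ 2 + B ^ 2 / (4 * c) * w p ^ 2 := by gcongr
  have lower_order := mul_le_mul_of_nonneg_right (abs_le.1 hB.pderiv_multiplier).1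
    (sq_nonneg (w p))
  linarith [mul_le_mul_of_nonneg_right hs.flux (sq_nonneg (w p))]

end TimeSlices

/-- A pair of weights on `Ω × [0, T]` for which the one-sided Carleman estimate holds: uniformly
pseudoconvex, stationary at the initial time, and with time derivative negative and dominating the
space derivative at the final time. -/
structure IsCarlemanWeight {n : ℕ} (Ω : Set (EuclideanSpace ℝ (Fin n))) (T c : ℝ)
    (φ θ : Spacetime n → ℝ) : Prop where
  pos : 0 < c
  contDiff : ContDiff ℝ 2 φ
  contDiff_multiplier : ContDiff ℝ 2 θ
  pseudoconvex : ∀ p ∈ Ω ×ˢ Icc 0 T, IsPseudoconvexAt c φ θ p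
  initial : ∀ x ∈ Ω, (minkowski n).pderiv none φ (x, 0) = 0
  final : ∀ x ∈ Ω, √(∑ i, (minkowski n).pderiv (some i) φ (x, T) ^ 2) + 2 * c
    ≤ -(minkowski n).pderiv none φ (x, T)

section Constants

open Filter Topology

variable {n : ℕ} {φ θ : Spacetime n → ℝ}

lemma exists_coefficientBoundAt {Ω : Set (EuclideanSpace ℝ (Fin n))} (hΩ : Bornology.IsBounded Ω)
    (T : ℝ) (hφ : ContDiff ℝ 2 φ) (hθ : ContDiff ℝ 2 θ) :
    ∃ B, 0 ≤ B ∧ ∀ p ∈ Ω ×ˢ Icc 0 T, CoefficientBoundAt B φ θ p := by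
  have hcompact : IsCompact (closure Ω ×ˢ Icc 0 T) := hΩ.isCompact_closure.prod isCompact_Icc
  have hΓ := (minkowski n).contDiff_one_gradInner hφ hφ
  have hΓt : Continuous ((minkowski n).pderiv none ((minkowski n).gradInner φ φ)) :=
    ((minkowski n).contDiff_pderiv (m := 0) hΓ (by norm_num) none).continuous
  have hφbox := (minkowski n).continuous_box hφ
  have hθbox := (minkowski n).continuous_box hθ
  have hθt := ((minkowski n).contDiff_one_pderiv hθ none).continuous
  have hθc := hθ.continuous
  have hφgrad := continuous_gradSq hφ
  let total (p : Spacetime n) := |(minkowski n).pderiv none ((minkowski n).gradInner φ φ) p|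
    + |(minkowski n).box θ p| + |θ p - (minkowski n).box φ p| + |θ p|
    + |(minkowski n).pderiv none θ p| + |gradSq φ p|
  obtain ⟨B, hB⟩ := hcompact.exists_bound_of_continuousOn
    (by fun_prop : Continuous total).continuousOn
  refine ⟨max B 0, le_max_right _ _, fun p hp => ?_⟩
  have total_le : total p ≤ max B 0 := (le_abs_self _).trans
    ((hB p ⟨subset_closure hp.1, hp.2⟩).trans (le_max_left _ _))
  simp only [total] at total_le
  constructor <;> linarith [abs_nonneg ((minkowski n).pderiv none ((minkowski n).gradInner φ φ) p),
    abs_nonneg ((minkowski n).box θ p), abs_nonneg (θ p - (minkowski n).box φ p),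
    abs_nonneg (θ p), abs_nonneg ((minkowski n).pderiv none θ p), abs_nonneg (gradSq φ p),
    le_abs_self (gradSq φ p)]

lemma eventually_admissibleParameters {c : ℝ} (hc : 0 < c) (B m : ℝ) :
    ∀ᶠ s in atTop, AdmissibleParameters c B m s (√(c / s) / 2) := by
  have tilt_tendsto : Tendsto (fun s => √(c / s) / 2) atTop (𝓝 0) := by
    simpa using ((tendsto_const_nhds.div_atTop tendsto_id).sqrt.div_const 2 :
      Tendsto (fun s => √(c / s) / 2) atTop _)
  have bulk_tendsto : Tendsto (fun s => 2 * (√(c / s) / 2) * B + B / s ^ 2 + 4 * B ^ 2 / s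
      + 4 * m ^ 2 / s ^ 3) atTop (𝓝 0) := by
    simpa using (((tilt_tendsto.const_mul 2).mul_const B).add
      (tendsto_const_nhds.div_atTop (tendsto_pow_atTop two_ne_zero))).add
      (tendsto_const_nhds.div_atTop tendsto_id) |>.add
      (tendsto_const_nhds.div_atTop (tendsto_pow_atTop three_ne_zero))
  have flux_tendsto : Tendsto (fun s : ℝ => 4 * c ^ 3 * s ^ 2) atTop atTop :=
    (tendsto_pow_atTop two_ne_zero).const_mul_atTop (by positivity)
  filter_upwards [eventually_gt_atTop 0, tilt_tendsto.eventually_le_const hc,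
    bulk_tendsto.eventually_le_const hc, flux_tendsto.eventually_ge_atTop (B ^ 2 / (4 * c) + B / 2)]
    with s hs tilt_le bulk flux
  refine ⟨hs, by positivity, ?_, tilt_le, flux, ?_⟩
  · rw [div_pow, sq_sqrt (by positivity)]
    exact le_of_eq (by field_simp; norm_num)
  · calc _ = s ^ 3 * (2 * (√(c / s) / 2) * B + B / s ^ 2 + 4 * B ^ 2 / s + 4 * m ^ 2 / s ^ 3) := by
          field_simp
      _ ≤ s ^ 3 * c := by gcongr

end Constants

/-! ### Integration over the cylinder -/

lemma setIntegral_fderiv_apply_eq_zero {E : Type*} [NormedAddCommGroup E] [NormedSpace ℝ E]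
    [FiniteDimensional ℝ E] [MeasurableSpace E] [BorelSpace E] (μ : Measure E)
    [μ.IsAddHaarMeasure] {K Ω : Set E} (hK : IsCompact K) (hKΩ : K ⊆ Ω) {g : E → ℝ}
    (hg : ContDiff ℝ 1 g) (hg₀ : ∀ x ∉ K, g x = 0) (v : E) :
    ∫ x in Ω, fderiv ℝ g x v ∂μ = 0 := by
  have hsupp : HasCompactSupport g := HasCompactSupport.intro hK hg₀
  have tsupport_subset : tsupport g ⊆ K :=
    closure_minimal (fun x hx => by_contra fun hxK => hx (hg₀ x hxK)) hK.isClosed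
  have fderiv_eq_zero : ∀ x ∉ Ω, fderiv ℝ g x v = 0 := by
    intro x hx
    rw [fderiv_of_notMem_tsupport ℝ fun h => hx (hKΩ (tsupport_subset h)), zero_apply]
  have hint : Integrable (fun x => fderiv ℝ g x v) μ :=
    ((hg.continuous_fderiv one_ne_zero).clm_apply continuous_const).integrable_of_hasCompactSupport
      (hsupp.fderiv_apply ℝ v)
  rw [setIntegral_eq_integral_of_forall_compl_eq_zero fderiv_eq_zero]
  simpa using integral_mul_fderiv_eq_neg_fderiv_mul_of_integrable (μ := μ)
    (f := fun _ : E => (1 : ℝ)) (g := g) (v := v) (by simp)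
    (by simpa using hint) (by simpa using hg.continuous.integrable_of_hasCompactSupport hsupp)
    (fun x _ => differentiableAt_const _) (fun x _ => hg.differentiable one_ne_zero x)

/-- Lebesgue measure on the cylinder `Ω × (0, T)`. -/
noncomputable def cylinderMeasure {n : ℕ} (Ω : Set (EuclideanSpace ℝ (Fin n))) (T : ℝ) :
    Measure (Spacetime n) :=
  (volume.restrict Ω).prod (volume.restrict (Ioo 0 T))

section Cylinder

variable {n : ℕ} {Ω K : Set (EuclideanSpace ℝ (Fin n))} {T : ℝ} {f : Spacetime n → ℝ}

lemma isFiniteMeasure_cylinderMeasure (hΩ : Bornology.IsBounded Ω) (T : ℝ) :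
    IsFiniteMeasure (cylinderMeasure Ω T) := by
  have : Fact (volume Ω < ⊤) := ⟨hΩ.measure_lt_top⟩
  unfold cylinderMeasure
  infer_instance

lemma ae_mem_cylinder (hΩ : MeasurableSet Ω) (T : ℝ) :
    ∀ᵐ p ∂cylinderMeasure Ω T, p ∈ Ω ×ˢ Icc 0 T := by
  rw [cylinderMeasure, Measure.prod_restrict]
  filter_upwards [ae_restrict_mem (hΩ.prod measurableSet_Ioo)] with p hp
  exact ⟨hp.1, Ioo_subset_Icc_self hp.2⟩

lemma integrable_cylinderMeasure (hΩ : MeasurableSet Ω) (hΩb : Bornology.IsBounded Ω) (T : ℝ)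
    (hf : Continuous f) : Integrable f (cylinderMeasure Ω T) := by
  have := isFiniteMeasure_cylinderMeasure hΩb T
  obtain ⟨C, hC⟩ := (hΩb.isCompact_closure.prod (isCompact_Icc (a := 0) (b := T)))
    |>.exists_bound_of_continuousOn hf.continuousOn
  refine Integrable.of_bound hf.aestronglyMeasurable C ?_
  filter_upwards [ae_mem_cylinder hΩ T] with p hp using hC p ⟨subset_closure hp.1, hp.2⟩

lemma setIntegral_setIntegral_eq (hf : Integrable f (cylinderMeasure Ω T)) :
    ∫ t in Ioo 0 T, ∫ x in Ω, f (x, t) = ∫ p, f p ∂cylinderMeasure Ω T :=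
  (integral_prod_symm f hf).symm

lemma integrableOn_of_continuous (hΩ : Bornology.IsBounded Ω) {g : EuclideanSpace ℝ (Fin n) → ℝ}
    (hg : Continuous g) : IntegrableOn g Ω :=
  (hg.continuousOn.integrableOn_compact hΩ.isCompact_closure).mono_set subset_closure

lemma integral_pderiv_some_eq_zero (hΩ : MeasurableSet Ω) (hΩb : Bornology.IsBounded Ω)
    (hK : IsCompact K) (hKΩ : K ⊆ Ω) (hf : ContDiff ℝ 1 f) (hf₀ : ∀ x ∉ K, ∀ t, f (x, t) = 0)
    (i : Fin n) : ∫ p, (minkowski n).pderiv (some i) f p ∂cylinderMeasure Ω T = 0 := by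
  have hcont : Continuous ((minkowski n).pderiv (some i) f) :=
    ((minkowski n).contDiff_pderiv (m := 0) hf (by norm_num) _).continuous
  rw [← setIntegral_setIntegral_eq (integrable_cylinderMeasure hΩ hΩb T hcont)]
  refine integral_eq_zero_of_ae (Filter.Eventually.of_forall fun t => ?_)
  simp only [← fderiv_slice_single (hf.differentiable one_ne_zero _)]
  exact setIntegral_fderiv_apply_eq_zero volume hK hKΩ (hf.comp (contDiff_id.prodMk contDiff_const))
    (fun x hx => hf₀ x hx t) _

lemma integral_pderiv_none (hΩ : MeasurableSet Ω) (hΩb : Bornology.IsBounded Ω) (hT : 0 ≤ T)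
    (hf : ContDiff ℝ 1 f) :
    ∫ p, (minkowski n).pderiv none f p ∂cylinderMeasure Ω T
      = ∫ x in Ω, (f (x, T) - f (x, 0)) := by
  have hcont : Continuous ((minkowski n).pderiv none f) :=
    ((minkowski n).contDiff_pderiv (m := 0) hf (by norm_num) _).continuous
  have hint := integrable_cylinderMeasure hΩ hΩb T hcont
  rw [cylinderMeasure] at hint ⊢
  rw [integral_prod _ hint]
  refine integral_congr_ae (Filter.Eventually.of_forall fun x => ?_)
  change ∫ t in Ioo 0 T, (minkowski n).pderiv none f (x, t) = _
  rw [← integral_Ioc_eq_integral_Ioo, ← intervalIntegral.integral_of_le hT]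
  exact intervalIntegral.integral_eq_sub_of_hasDerivAt
    (fun t _ => hasDerivAt_pderiv_none (hf.differentiable one_ne_zero _))
    ((hcont.comp (Continuous.prodMk_right x)).intervalIntegrable _ _)

lemma integral_div_cylinder (hΩ : MeasurableSet Ω) (hΩb : Bornology.IsBounded Ω) (hT : 0 ≤ T)
    (hK : IsCompact K) (hKΩ : K ⊆ Ω) {J : Option (Fin n) → Spacetime n → ℝ}
    (hJ : ∀ a, ContDiff ℝ 1 (J a)) (hJ₀ : ∀ a, ∀ x ∉ K, ∀ t, J a (x, t) = 0) :
    ∫ p, (minkowski n).div J p ∂cylinderMeasure Ω T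
      = ∫ x in Ω, (J none (x, T) - J none (x, 0)) := by
  have hint (a : Option (Fin n)) :
      Integrable ((minkowski n).pderiv a (J a)) (cylinderMeasure Ω T) :=
    integrable_cylinderMeasure hΩ hΩb T
      ((minkowski n).contDiff_pderiv (m := 0) (hJ a) (by norm_num) a).continuous
  simp only [WeightedFrame.div]
  rw [integral_finsetSum _ fun a _ => hint a, Fintype.sum_option,
    integral_pderiv_none hΩ hΩb hT (hJ none),
    Finset.sum_eq_zero fun i _ =>
      integral_pderiv_some_eq_zero hΩ hΩb hK hKΩ (hJ (some i)) (hJ₀ (some i)) i, add_zero]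

end Cylinder

section ConjugatedEstimate

variable {n : ℕ} {Ω K : Set (EuclideanSpace ℝ (Fin n))} {T c B m s τ : ℝ}
  {φ θ w q : Spacetime n → ℝ}

lemma carlemanFlux_eq_zero (hK : IsClosed K) (hw₀ : ∀ x ∉ K, ∀ t, w (x, t) = 0)
    {x : EuclideanSpace ℝ (Fin n)} (hx : x ∉ K) (a : Option (Fin n)) (t : ℝ) :
    carlemanFlux s τ φ θ w a (x, t) = 0 := by
  have hpderiv₀ (b : Option (Fin n)) : (minkowski n).pderiv b w (x, t) = 0 :=
    (minkowski n).pderiv_eq_zero_of_forall_notMem (hK.preimage continuous_fst)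
      (fun p hp => hw₀ p.1 hp p.2) hx b
  simp [carlemanFlux, WeightedFrame.flux, WeightedFrame.multiplier, WeightedFrame.grad,
    WeightedFrame.gradInner, WeightedFrame.form, hpderiv₀, hw₀ x hx t]

lemma integral_div_carlemanFlux_le (hφ : IsCarlemanWeight Ω T c φ θ)
    (hB : ∀ p ∈ Ω ×ˢ Icc 0 T, CoefficientBoundAt B φ θ p) (hs : AdmissibleParameters c B m s τ)
    (hΩ : MeasurableSet Ω) (hΩb : Bornology.IsBounded Ω) (hT : 0 ≤ T) (hK : IsCompact K)
    (hKΩ : K ⊆ Ω) (hw : ContDiff ℝ 2 w) (hw₀ : ∀ x ∉ K, ∀ t, w (x, t) = 0)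
    (hinit : ∀ x, w (x, 0) = 0) :
    ∫ p, (minkowski n).div (carlemanFlux s τ φ θ w) p ∂cylinderMeasure Ω T
      ≤ -(τ * ∫ x in Ω, (minkowski n).pderiv none w (x, 0) ^ 2) := by
  have hflux := contDiff_one_carlemanFlux (s := s) (τ := τ) hφ.contDiff hφ.contDiff_multiplier hw
  have hflux_int (t : ℝ) : IntegrableOn (fun x => carlemanFlux s τ φ θ w none (x, t)) Ω :=
    integrableOn_of_continuous hΩb ((hflux none).continuous.comp (Continuous.prodMk_left t))
  have hwt_int : IntegrableOn (fun x => (minkowski n).pderiv none w (x, 0) ^ 2) Ω :=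
    integrableOn_of_continuous hΩb ((((minkowski n).contDiff_one_pderiv hw none).continuous.comp
      (Continuous.prodMk_left 0)).pow 2)
  rw [integral_div_cylinder hΩ hΩb hT hK hKΩ hflux
    fun a x hx t => carlemanFlux_eq_zero hK.isClosed hw₀ hx a t, ← integral_const_mul,
    ← integral_neg]
  refine setIntegral_mono_on ((hflux_int T).sub (hflux_int 0)) (hwt_int.const_mul τ).neg hΩ
    fun x hx => ?_
  have flux_final : carlemanFlux s τ φ θ w none (x, T) ≤ 0 :=
    carlemanFlux_none_nonpos hφ.contDiff (hB _ ⟨hx, right_mem_Icc.2 hT⟩) hs (hφ.final x hx)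
  have flux_initial : carlemanFlux s τ φ θ w none (x, 0)
      = τ * (minkowski n).pderiv none w (x, 0) ^ 2 := by
    refine carlemanFlux_none_of_eq_zero hφ.contDiff (hinit x) (fun i => ?_) (hφ.initial x hx)
    rw [← fderiv_slice_single (hw.differentiable two_ne_zero _) i, funext hinit,
      fderiv_fun_const, Pi.zero_apply, zero_apply]
  linarith

lemma integrable_sq_add_mul {f g : Spacetime n → ℝ} (hΩ : MeasurableSet Ω)
    (hΩb : Bornology.IsBounded Ω) (hf : Continuous f) (hg : Continuous g)
    (hq : AEMeasurable q (cylinderMeasure Ω T)) (hqm : ∀ᵐ p ∂cylinderMeasure Ω T, |q p| ≤ m) :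
    Integrable (fun p => (f p + q p * g p) ^ 2) (cylinderMeasure Ω T) := by
  refine (integrable_cylinderMeasure (f := fun p => 2 * f p ^ 2 + 2 * (m ^ 2 * g p ^ 2)) hΩ hΩb T
    (by fun_prop)).mono'
    ((hf.aemeasurable.add (hq.mul hg.aemeasurable)).pow_const 2).aestronglyMeasurable ?_
  filter_upwards [hqm] with p hp
  have hq_sq : q p ^ 2 ≤ m ^ 2 := sq_le_sq' (abs_le.1 hp).1 (abs_le.1 hp).2
  calc ‖(f p + q p * g p) ^ 2‖ = (f p + q p * g p) ^ 2 := norm_of_nonneg (sq_nonneg _)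
    _ ≤ 2 * (f p ^ 2 + (q p * g p) ^ 2) := add_sq_le
    _ = 2 * f p ^ 2 + 2 * (q p ^ 2 * g p ^ 2) := by ring
    _ ≤ 2 * f p ^ 2 + 2 * (m ^ 2 * g p ^ 2) := by gcongr

lemma conjugated_carleman_estimate (hφ : IsCarlemanWeight Ω T c φ θ)
    (hB : ∀ p ∈ Ω ×ˢ Icc 0 T, CoefficientBoundAt B φ θ p) (hs : AdmissibleParameters c B m s τ)
    (hΩ : MeasurableSet Ω) (hΩb : Bornology.IsBounded Ω) (hT : 0 ≤ T) (hK : IsCompact K)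
    (hKΩ : K ⊆ Ω) (hq : AEMeasurable q (cylinderMeasure Ω T))
    (hqm : ∀ᵐ p ∂cylinderMeasure Ω T, |q p| ≤ m) (hw : ContDiff ℝ 2 w)
    (hw₀ : ∀ x ∉ K, ∀ t, w (x, t) = 0) (hinit : ∀ x, w (x, 0) = 0) :
    2 * s * τ * (∫ x in Ω, (minkowski n).pderiv none w (x, 0) ^ 2)
        + s * c * (∫ p, gradSq w p ∂cylinderMeasure Ω T)
        + s ^ 3 * c * (∫ p, w p ^ 2 ∂cylinderMeasure Ω T)
      ≤ 2 * ∫ p, ((minkowski n).conjBox s φ w p + q p * w p) ^ 2 ∂cylinderMeasure Ω T := by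
  have hgrad := (integrable_cylinderMeasure hΩ hΩb T (continuous_gradSq hw)).const_mul (s * c)
  have hsq := (integrable_cylinderMeasure (f := fun p => w p ^ 2) hΩ hΩb T
    (hw.continuous.pow 2)).const_mul (s ^ 3 * c)
  have hdiv : Integrable (fun p => 2 * s * (minkowski n).div (carlemanFlux s τ φ θ w) p)
      (cylinderMeasure Ω T) :=
    (integrable_cylinderMeasure hΩ hΩb T (continuous_finsetSum _ fun a _ =>
      ((minkowski n).contDiff_pderiv (m := 0) (contDiff_one_carlemanFlux hφ.contDiff
        hφ.contDiff_multiplier hw a) (by norm_num) a).continuous)).const_mul (2 * s)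
  have hres := (integrable_sq_add_mul hΩ hΩb
    ((minkowski n).continuous_conjBox hφ.contDiff hw s) hw.continuous hq hqm).const_mul 2
  have integrated := integral_mono_ae ((hgrad.add hsq).sub hdiv) hres (by
    filter_upwards [ae_mem_cylinder hΩ T, hqm] with p hp hqp
    exact le_sq_conjBox_add_mul hφ.contDiff hφ.contDiff_multiplier hw (hφ.pseudoconvex p hp)
      (hB p hp) hs hqp)
  rw [integral_sub' (hgrad.add hsq) hdiv, integral_add' hgrad hsq, integral_const_mul,
    integral_const_mul, integral_const_mul, integral_const_mul] at integrated
  have boundary := mul_le_mul_of_nonneg_left (integral_div_carlemanFlux_le hφ hB hs hΩ hΩb hT hK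
    hKΩ hw hw₀ hinit) (mul_nonneg zero_le_two hs.pos.le)
  linarith

end ConjugatedEstimate

section CarlemanEstimate

variable {n : ℕ} {Ω K : Set (EuclideanSpace ℝ (Fin n))} {T c B m s τ : ℝ}
  {φ θ z q : Spacetime n → ℝ}

lemma exp_two_mul_mul (s a : ℝ) : exp (2 * s * a) = exp (s * a) ^ 2 := by
  rw [← exp_nat_mul, Nat.cast_ofNat, mul_assoc]

lemma pderiv_exp_mul (hφ : ContDiff ℝ 2 φ) (hz : ContDiff ℝ 2 z) (s : ℝ) (a : Option (Fin n))
    (p : Spacetime n) :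
    (minkowski n).pderiv a (fun p => exp (s * φ p) * z p) p
      = exp (s * φ p) * ((minkowski n).pderiv a z p + s * (minkowski n).pderiv a φ p * z p) := by
  have hφd := hφ.differentiable two_ne_zero p
  rw [WeightedFrame.pderiv_mul _ (hφd.const_mul s).exp (hz.differentiable two_ne_zero p),
    WeightedFrame.pderiv_exp _ (hφd.const_mul s), WeightedFrame.pderiv_const_mul _ hφd]
  ring

lemma exp_mul_gradSq_le (hφ : ContDiff ℝ 2 φ) (hz : ContDiff ℝ 2 z) (s : ℝ) (p : Spacetime n) :
    exp (2 * s * φ p) * gradSq z p ≤ 2 * gradSq (fun p => exp (s * φ p) * z p) p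
      + 2 * s ^ 2 * gradSq φ p * (exp (s * φ p) * z p) ^ 2 := by
  simp only [gradSq, exp_two_mul_mul, Finset.mul_sum, Finset.sum_mul, ← Finset.sum_add_distrib,
    pderiv_exp_mul hφ hz]
  refine Finset.sum_le_sum fun a _ => ?_
  nlinarith [sq_nonneg (exp (s * φ p) * ((minkowski n).pderiv a z p
    + 2 * (s * (minkowski n).pderiv a φ p * z p)))]

lemma exp_mul_sq_residual (hφ : ContDiff ℝ 2 φ) (hz : ContDiff ℝ 2 z) (s : ℝ) (p : Spacetime n) :
    exp (2 * s * φ p) * ((minkowski n).box z p + q p * z p) ^ 2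
      = ((minkowski n).conjBox s φ (fun p => exp (s * φ p) * z p) p
        + q p * (exp (s * φ p) * z p)) ^ 2 := by
  rw [exp_two_mul_mul, ← (minkowski n).exp_mul_box hφ hz]
  ring

lemma integrable_exp_mul_sq_residual (hφ : ContDiff ℝ 2 φ) (hz : ContDiff ℝ 2 z) (s : ℝ)
    (hΩ : MeasurableSet Ω) (hΩb : Bornology.IsBounded Ω)
    (hq : AEMeasurable q (cylinderMeasure Ω T)) (hqm : ∀ᵐ p ∂cylinderMeasure Ω T, |q p| ≤ m) :
    Integrable (fun p => exp (2 * s * φ p) * ((minkowski n).box z p + q p * z p) ^ 2)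
      (cylinderMeasure Ω T) := by
  have hw : ContDiff ℝ 2 fun p => exp (s * φ p) * z p := (contDiff_const.mul hφ).exp.mul hz
  simp only [exp_mul_sq_residual hφ hz]
  exact integrable_sq_add_mul hΩ hΩb ((minkowski n).continuous_conjBox hφ hw s) hw.continuous hq hqm

lemma integral_exp_mul_gradSq_le (hφ : ContDiff ℝ 2 φ) (hz : ContDiff ℝ 2 z) (s : ℝ)
    (hB : ∀ p ∈ Ω ×ˢ Icc 0 T, gradSq φ p ≤ B) (hΩ : MeasurableSet Ω)
    (hΩb : Bornology.IsBounded Ω) :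
    ∫ p, exp (2 * s * φ p) * gradSq z p ∂cylinderMeasure Ω T
      ≤ 2 * (∫ p, gradSq (fun p => exp (s * φ p) * z p) p ∂cylinderMeasure Ω T)
        + 2 * s ^ 2 * B * ∫ p, (exp (s * φ p) * z p) ^ 2 ∂cylinderMeasure Ω T := by
  have hw : ContDiff ℝ 2 fun p => exp (s * φ p) * z p := (contDiff_const.mul hφ).exp.mul hz
  have hlhs : Continuous fun p => exp (2 * s * φ p) * gradSq z p :=
    (contDiff_const.mul hφ).exp.continuous.mul (continuous_gradSq hz)
  have hgrad := (integrable_cylinderMeasure hΩ hΩb T (continuous_gradSq hw)).const_mul 2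
  have hsq := (integrable_cylinderMeasure (f := fun p => (exp (s * φ p) * z p) ^ 2) hΩ hΩb T
    (hw.continuous.pow 2)).const_mul (2 * s ^ 2 * B)
  rw [← integral_const_mul, ← integral_const_mul, ← integral_add hgrad hsq]
  refine integral_mono_ae (integrable_cylinderMeasure hΩ hΩb T hlhs) (hgrad.add hsq) ?_
  filter_upwards [ae_mem_cylinder hΩ T] with p hp
  refine (exp_mul_gradSq_le hφ hz s p).trans ?_
  gcongr
  exact hB p hp

lemma carleman_estimate_of_admissibleParameters (hφ : IsCarlemanWeight Ω T c φ θ) (hB₀ : 0 ≤ B)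
    (hB : ∀ p ∈ Ω ×ˢ Icc 0 T, CoefficientBoundAt B φ θ p) (hs : AdmissibleParameters c B m s τ)
    (hΩ : MeasurableSet Ω) (hΩb : Bornology.IsBounded Ω) (hT : 0 ≤ T) (hK : IsCompact K)
    (hKΩ : K ⊆ Ω) (hq : AEMeasurable q (cylinderMeasure Ω T))
    (hqm : ∀ᵐ p ∂cylinderMeasure Ω T, |q p| ≤ m) (hz : ContDiff ℝ 2 z)
    (hz₀ : ∀ x ∉ K, ∀ t, z (x, t) = 0) (hinit : ∀ x, z (x, 0) = 0) :
    2 * s * τ * (∫ x in Ω, exp (2 * s * φ (x, 0)) * (minkowski n).pderiv none z (x, 0) ^ 2)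
        + s * c * (∫ p, exp (2 * s * φ p) * gradSq z p ∂cylinderMeasure Ω T)
        + s ^ 3 * c * (∫ p, exp (2 * s * φ p) * z p ^ 2 ∂cylinderMeasure Ω T)
      ≤ 4 * (1 + B) * ∫ p, exp (2 * s * φ p) * ((minkowski n).box z p + q p * z p) ^ 2
          ∂cylinderMeasure Ω T := by
  have hw : ContDiff ℝ 2 fun p => exp (s * φ p) * z p :=
    (contDiff_const.mul hφ.contDiff).exp.mul hz
  have conj := conjugated_carleman_estimate hφ hB hs hΩ hΩb hT hK hKΩ hq hqm hw
    (fun x hx t => by rw [hz₀ x hx t, mul_zero]) (fun x => by rw [hinit x, mul_zero])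
  have initial_eq (x : EuclideanSpace ℝ (Fin n)) :
      (minkowski n).pderiv none (fun p => exp (s * φ p) * z p) (x, 0) ^ 2
        = exp (2 * s * φ (x, 0)) * (minkowski n).pderiv none z (x, 0) ^ 2 := by
    rw [pderiv_exp_mul hφ.contDiff hz, hinit, exp_two_mul_mul]
    ring
  have sq_eq (p : Spacetime n) : (exp (s * φ p) * z p) ^ 2 = exp (2 * s * φ p) * z p ^ 2 := by
    rw [exp_two_mul_mul, mul_pow]
  have gradient := integral_exp_mul_gradSq_le hφ.contDiff hz s (fun p hp => (hB p hp).gradSq) hΩ hΩb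
  simp only [initial_eq, ← exp_mul_sq_residual hφ.contDiff hz, sq_eq] at conj gradient
  have initial_nonneg : 0 ≤ 2 * s * τ * ∫ x in Ω,
      exp (2 * s * φ (x, 0)) * (minkowski n).pderiv none z (x, 0) ^ 2 :=
    mul_nonneg (mul_nonneg (mul_nonneg zero_le_two hs.pos.le) hs.tilt_pos.le)
      (integral_nonneg fun _ => by positivity)
  have gradient_nonneg : 0 ≤ s * c * ∫ p, gradSq (fun p => exp (s * φ p) * z p) p
      ∂cylinderMeasure Ω T :=
    mul_nonneg (mul_nonneg hs.pos.le hφ.pos.le)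
      (integral_nonneg fun _ => Finset.sum_nonneg fun _ _ => sq_nonneg _)
  have mass_nonneg : 0 ≤ s ^ 3 * c * ∫ p, exp (2 * s * φ p) * z p ^ 2 ∂cylinderMeasure Ω T :=
    mul_nonneg (mul_nonneg (pow_nonneg hs.pos.le 3) hφ.pos.le)
      (integral_nonneg fun _ => by positivity)
  have scaled_conj := mul_le_mul_of_nonneg_left conj (by linarith : 0 ≤ 2 * (1 + B))
  have scaled_gradient := mul_le_mul_of_nonneg_left gradient (mul_nonneg hs.pos.le hφ.pos.le)
  nlinarith [mul_nonneg hB₀ initial_nonneg, mul_nonneg hB₀ gradient_nonneg]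

lemma carleman_estimate_of_isCarlemanWeight (hφ : IsCarlemanWeight Ω T c φ θ)
    (hΩ : MeasurableSet Ω) (hΩb : Bornology.IsBounded Ω) (hT : 0 ≤ T) (m : ℝ) :
    ∃ s₀ > 0, ∃ M > 0, ∀ s ≥ s₀, ∀ q z : Spacetime n → ℝ,
      AEMeasurable q (cylinderMeasure Ω T) → (∀ᵐ p ∂cylinderMeasure Ω T, |q p| ≤ m) →
      ContDiff ℝ 2 z → (∃ K, IsCompact K ∧ K ⊆ Ω ∧ ∀ x ∉ K, ∀ t, z (x, t) = 0) →
      (∀ x, z (x, 0) = 0) →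
      √s * (∫ x in Ω, exp (2 * s * φ (x, 0)) * (minkowski n).pderiv none z (x, 0) ^ 2)
          + s * (∫ p, exp (2 * s * φ p) * gradSq z p ∂cylinderMeasure Ω T)
          + s ^ 3 * (∫ p, exp (2 * s * φ p) * z p ^ 2 ∂cylinderMeasure Ω T)
        ≤ M * ∫ p, exp (2 * s * φ p) * ((minkowski n).box z p + q p * z p) ^ 2
            ∂cylinderMeasure Ω T := by
  have hc := hφ.pos
  obtain ⟨B, hB₀, hB⟩ := exists_coefficientBoundAt hΩb T hφ.contDiff hφ.contDiff_multiplier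
  obtain ⟨s₀, hs₀⟩ := Filter.eventually_atTop.1 (eventually_admissibleParameters hc B m)
  refine ⟨s₀, (hs₀ s₀ le_rfl).pos, 4 * (1 + B) / min (√c) c, by positivity,
    fun s hs q z hq hqm hz ⟨K, hK, hKΩ, hz₀⟩ hinit => ?_⟩
  have hs' := hs₀ s hs
  have spos := hs'.pos
  have estimate := carleman_estimate_of_admissibleParameters hφ hB₀ hB hs' hΩ hΩb hT hK hKΩ hq hqm
    hz hz₀ hinit
  have tilt_eq : 2 * s * (√(c / s) / 2) = √c * √s := by
    rw [sqrt_div hc.le]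
    field_simp
    rw [sq_sqrt spos.le]
  rw [tilt_eq] at estimate
  have gradient_nonneg : 0 ≤ ∫ p, exp (2 * s * φ p) * gradSq z p ∂cylinderMeasure Ω T :=
    integral_nonneg fun _ => mul_nonneg (exp_pos _).le (Finset.sum_nonneg fun _ _ => sq_nonneg _)
  rw [div_mul_eq_mul_div, le_div_iff₀ (by positivity), mul_comm, mul_add, mul_add, ← mul_assoc,
    ← mul_assoc, ← mul_assoc]
  refine le_trans ?_ estimate
  rw [mul_comm s c, mul_comm (s ^ 3) c]
  gcongr
  exacts [min_le_left _ _, min_le_right _ _, min_le_right _ _]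

end CarlemanEstimate

/-! ### The weight `e^{λψ}` -/

section ExponentialWeight

variable {n : ℕ} {ψ : Spacetime n → ℝ} {p : Spacetime n} {c d g κ l : ℝ}

lemma isPseudoconvexAt_exp_const_mul (hψ : ContDiff ℝ 2 ψ)
    (hconv : ∀ ξ : Option (Fin n) → ℝ, d * ∑ a, ξ a ^ 2
      ≤ (minkowski n).hess ψ p ξ ξ + κ * (minkowski n).form ξ ξ)
    (hgrad : g ≤ gradSq ψ p) (hd : 0 ≤ d) (hl : 0 < l) (hκ : 2 * κ ^ 2 ≤ l * (d * g))
    (hc : c ≤ 2 * (l * exp (l * ψ p)) * d) (hc' : c ≤ (l * exp (l * ψ p)) ^ 3 * (d * g)) :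
    IsPseudoconvexAt c (fun x => exp (l * ψ x)) (fun x =>
      (minkowski n).box (fun x => exp (l * ψ x)) x + 2 * κ * (l * exp (l * ψ x))) p := by
  refine ⟨fun ξ => ?_, ?_⟩
  · have norm_nonneg : 0 ≤ ∑ a, ξ a ^ 2 := Finset.sum_nonneg fun _ _ => sq_nonneg _
    rw [(minkowski n).hess_exp_const_mul_self hψ, add_sub_cancel_left]
    set k := l * exp (l * ψ p)
    have hk : 0 < k := by positivity
    have square_nonneg :
        0 ≤ 2 * k * (l * (minkowski n).form ((minkowski n).pderiv · ψ p) ξ ^ 2) := by positivity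
    linarith [mul_le_mul_of_nonneg_right hc norm_nonneg,
      mul_le_mul_of_nonneg_left (hconv ξ) (mul_nonneg zero_le_two hk.le)]
  · have grad_conv := hconv ((minkowski n).pderiv · ψ p)
    rw [← WeightedFrame.gradInner, ← gradSq] at grad_conv
    rw [(minkowski n).hess_exp_const_mul_pderiv hψ, add_sub_cancel_left,
      (minkowski n).gradInner_exp_const_mul_self (hψ.differentiable two_ne_zero p)]
    set Γ := (minkowski n).gradInner ψ ψ p
    set H := (minkowski n).hess ψ p ((minkowski n).pderiv · ψ p) ((minkowski n).pderiv · ψ p)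
    have completed_square : -(d * g) ≤ 2 * l * Γ ^ 2 - 4 * κ * Γ := by
      refine le_of_mul_le_mul_left ?_ hl
      nlinarith [sq_nonneg (l * Γ - κ)]
    calc c ≤ (l * exp (l * ψ p)) ^ 3 * (d * g) := hc'
      _ ≤ (l * exp (l * ψ p)) ^ 3 * (2 * (H + l * Γ ^ 2) - 2 * κ * Γ) := by
          gcongr
          linarith [mul_le_mul_of_nonneg_left hgrad hd]
      _ = _ := by ring

end ExponentialWeight

section Psi

variable {n : ℕ} (x₀ : EuclideanSpace ℝ (Fin n)) (β C₀ : ℝ)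

lemma contDiff_psi {k : WithTop ℕ∞} : ContDiff ℝ k (Function.uncurry (psi x₀ β C₀)) :=
  (((contDiff_fst.sub contDiff_const).norm_sq ℝ).sub
    (contDiff_const.mul (contDiff_snd.pow 2))).add contDiff_const

lemma hasFDerivAt_psi (p : Spacetime n) :
    HasFDerivAt (Function.uncurry (psi x₀ β C₀))
      (2 • (innerSL ℝ (p.1 - x₀)).comp (ContinuousLinearMap.fst ℝ _ ℝ)
        - (2 * β * p.2) • ContinuousLinearMap.snd ℝ _ ℝ) p := by
  have hspace := ((hasFDerivAt_fst (𝕜 := ℝ) (p := p)).sub_const x₀).norm_sq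
  have htime := ((hasFDerivAt_snd (𝕜 := ℝ) (p := p)).pow 2).const_mul β
  refine ((hspace.sub htime).add_const C₀).congr_fderiv ?_
  rw [smul_smul]
  congr 2
  simp only [Nat.add_one_sub_one, pow_one, nsmul_eq_mul, Nat.cast_ofNat]
  ring

lemma pderiv_psi_none (p : Spacetime n) :
    (minkowski n).pderiv none (Function.uncurry (psi x₀ β C₀)) p = -(2 * β * p.2) := by
  simp [WeightedFrame.pderiv, (hasFDerivAt_psi x₀ β C₀ p).fderiv, minkowski]

lemma pderiv_psi_some (i : Fin n) (p : Spacetime n) :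
    (minkowski n).pderiv (some i) (Function.uncurry (psi x₀ β C₀)) p = 2 * (p.1 i - x₀ i) := by
  simp [WeightedFrame.pderiv, (hasFDerivAt_psi x₀ β C₀ p).fderiv, minkowski,
    EuclideanSpace.inner_single_right]

lemma pderiv_pderiv_psi_none (a : Option (Fin n)) (p : Spacetime n) :
    (minkowski n).pderiv a ((minkowski n).pderiv none (Function.uncurry (psi x₀ β C₀))) p
      = if a = none then -(2 * β) else 0 := by
  rw [funext (pderiv_psi_none x₀ β C₀)]
  have h : HasFDerivAt (fun p : Spacetime n => -(2 * β * p.2))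
      (-((2 * β) • ContinuousLinearMap.snd ℝ _ ℝ)) p := (hasFDerivAt_snd.const_mul (2 * β)).neg
  cases a <;> simp [WeightedFrame.pderiv, h.fderiv, minkowski]

lemma pderiv_pderiv_psi_some (a : Option (Fin n)) (i : Fin n) (p : Spacetime n) :
    (minkowski n).pderiv a ((minkowski n).pderiv (some i) (Function.uncurry (psi x₀ β C₀))) p
      = if a = some i then 2 else 0 := by
  rw [funext (pderiv_psi_some x₀ β C₀ i)]
  have h : HasFDerivAt (fun p : Spacetime n => 2 * (p.1 i - x₀ i))
      ((2 : ℝ) • (EuclideanSpace.proj (𝕜 := ℝ) i).comp (ContinuousLinearMap.fst ℝ _ ℝ)) p :=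
    (((EuclideanSpace.proj (𝕜 := ℝ) i).comp (ContinuousLinearMap.fst ℝ _ ℝ)).hasFDerivAt.sub_const
      (x₀ i)).const_mul 2
  cases a <;> simp [WeightedFrame.pderiv, h.fderiv, minkowski, eq_comm]

lemma hess_psi_add_form (ξ : Option (Fin n) → ℝ) (p : Spacetime n) :
    (minkowski n).hess (Function.uncurry (psi x₀ β C₀)) p ξ ξ
        + (1 + β) * (minkowski n).form ξ ξ = (1 - β) * ∑ a, ξ a ^ 2 := by
  simp only [WeightedFrame.hess, form_minkowski, Fintype.sum_option, pderiv_pderiv_psi_none,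
    pderiv_pderiv_psi_some]
  simp only [minkowski, Option.elim_none, mul_one, ↓reduceIte, neg_mul, mul_neg, one_mul,
    Option.elim_some, reduceCtorEq, zero_mul, mul_zero, Finset.sum_const_zero, add_zero, neg_neg,
    Option.some.injEq, ite_mul, mul_ite, Finset.sum_ite_eq, Finset.mem_univ, zero_add]
  simp only [mul_assoc, ← Finset.mul_sum, ← sq]
  ring

lemma sum_sq_pderiv_psi_some (p : Spacetime n) :
    ∑ i, (minkowski n).pderiv (some i) (Function.uncurry (psi x₀ β C₀)) p ^ 2
      = 4 * ‖p.1 - x₀‖ ^ 2 := by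
  simp only [pderiv_psi_some, EuclideanSpace.real_norm_sq_eq, Finset.mul_sum]
  exact Finset.sum_congr rfl fun i _ => by simp; ring

lemma four_mul_sq_norm_le_gradSq_psi (p : Spacetime n) :
    4 * ‖p.1 - x₀‖ ^ 2 ≤ gradSq (Function.uncurry (psi x₀ β C₀)) p := by
  rw [gradSq_eq_add_sum, sum_sq_pderiv_psi_some]
  exact le_add_of_nonneg_left (sq_nonneg _)

end Psi

section Phi

variable {n : ℕ} {Ω : Set (EuclideanSpace ℝ (Fin n))} {x₀ : EuclideanSpace ℝ (Fin n)}
  {T β c l δ : ℝ}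

/-- The multiplier `θ = □φ + 2 (1 + β) λ φ` paired with the weight `φ = e^{λψ}`. -/
noncomputable def phiMultiplier (x₀ : EuclideanSpace ℝ (Fin n)) (β C₀ l : ℝ) (p : Spacetime n) :
    ℝ :=
  (minkowski n).box (Function.uncurry (phi x₀ β C₀ l)) p
    + 2 * (1 + β) * (l * phi x₀ β C₀ l p.1 p.2)

lemma contDiff_phi (x₀ : EuclideanSpace ℝ (Fin n)) (β C₀ l : ℝ) {k : WithTop ℕ∞} :
    ContDiff ℝ k (Function.uncurry (phi x₀ β C₀ l)) :=
  (contDiff_const.mul (contDiff_psi x₀ β C₀)).exp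

lemma contDiff_phiMultiplier (x₀ : EuclideanSpace ℝ (Fin n)) (β C₀ l : ℝ) :
    ContDiff ℝ 2 (phiMultiplier x₀ β C₀ l) :=
  ((minkowski n).contDiff_box (k := 2 + 1 + 1) (contDiff_phi x₀ β C₀ l) le_rfl).add
    (contDiff_const.mul (contDiff_const.mul (contDiff_phi x₀ β C₀ l)))

lemma pderiv_phi (x₀ : EuclideanSpace ℝ (Fin n)) (β C₀ l : ℝ) (a : Option (Fin n))
    (p : Spacetime n) : (minkowski n).pderiv a (Function.uncurry (phi x₀ β C₀ l)) p
      = l * phi x₀ β C₀ l p.1 p.2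
        * (minkowski n).pderiv a (Function.uncurry (psi x₀ β C₀)) p :=
  (minkowski n).pderiv_exp_const_mul
    ((contDiff_psi x₀ β C₀ (k := 2)).differentiable two_ne_zero p) l a

lemma isPseudoconvexAt_phi {C₀ : ℝ} {p : Spacetime n} (hβ : β ∈ Ioo 0 1) (hδ : 0 < δ)
    (hp : δ ≤ ‖p.1 - x₀‖) (hl : l = 2 / ((1 - β) * δ ^ 2))
    (hc : c ≤ 2 * (l * phi x₀ β C₀ l p.1 p.2) * (1 - β))
    (hc' : c ≤ (l * phi x₀ β C₀ l p.1 p.2) ^ 3 * ((1 - β) * (4 * δ ^ 2))) :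
    IsPseudoconvexAt c (Function.uncurry (phi x₀ β C₀ l)) (phiMultiplier x₀ β C₀ l) p := by
  have hd : 0 < 1 - β := sub_pos.2 hβ.2
  have hgrad : 4 * δ ^ 2 ≤ gradSq (Function.uncurry (psi x₀ β C₀)) p :=
    le_trans (by gcongr) (four_mul_sq_norm_le_gradSq_psi x₀ β C₀ p)
  have hκ : 2 * (1 + β) ^ 2 ≤ l * ((1 - β) * (4 * δ ^ 2)) := by
    have : l * ((1 - β) * (4 * δ ^ 2)) = 8 := by rw [hl]; field_simp; norm_num
    nlinarith [hβ.1, hβ.2]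
  exact isPseudoconvexAt_exp_const_mul (contDiff_psi x₀ β C₀)
    (fun ξ => (hess_psi_add_form x₀ β C₀ ξ p).ge) hgrad hd.le (by rw [hl]; positivity) hκ hc hc'

lemma exists_pos_forall_le_norm_sub (hx₀ : x₀ ∉ closure Ω) :
    ∃ δ > 0, ∀ x ∈ Ω, δ ≤ ‖x - x₀‖ := by
  simp only [Metric.mem_closure_iff, not_forall, not_exists, not_and, not_lt] at hx₀
  obtain ⟨δ, hδ, hdist⟩ := hx₀
  exact ⟨δ, hδ, fun x hx => (hdist x hx).trans_eq (by rw [dist_comm, dist_eq_norm])⟩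

lemma norm_sub_le_sSup_image (hΩ : Bornology.IsBounded Ω) {x : EuclideanSpace ℝ (Fin n)}
    (hx : x ∈ Ω) : ‖x - x₀‖ ≤ sSup ((fun x => ‖x - x₀‖) '' Ω) := by
  obtain ⟨r, hr⟩ := hΩ.subset_closedBall x₀
  exact le_csSup ⟨r, forall_mem_image.2 fun y hy => mem_closedBall_iff_norm.1 (hr hy)⟩
    (mem_image_of_mem _ hx)

lemma sqrt_sum_sq_pderiv_phi {C₀ : ℝ} (hl : 0 ≤ l) (p : Spacetime n) :
    √(∑ i, (minkowski n).pderiv (some i) (Function.uncurry (phi x₀ β C₀ l)) p ^ 2)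
      = 2 * (l * phi x₀ β C₀ l p.1 p.2) * ‖p.1 - x₀‖ := by
  have hphi : 0 ≤ phi x₀ β C₀ l p.1 p.2 := (exp_pos _).le
  rw [← sqrt_sq (by positivity : 0 ≤ 2 * (l * phi x₀ β C₀ l p.1 p.2) * ‖p.1 - x₀‖)]
  simp only [pderiv_phi, mul_pow, ← Finset.mul_sum, sum_sq_pderiv_psi_some]
  ring_nf

lemma exists_isCarlemanWeight_phi (hΩ : Bornology.IsBounded Ω) (hx₀ : x₀ ∉ closure Ω)
    (hβ : β ∈ Ioo 0 1) (htime : sSup ((fun x => ‖x - x₀‖) '' Ω) < β * T) (C₀ : ℝ) :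
    ∃ l > 0, ∃ c, IsCarlemanWeight Ω T c (Function.uncurry (phi x₀ β C₀ l))
      (phiMultiplier x₀ β C₀ l) := by
  obtain ⟨δ, hδ, le_norm⟩ := exists_pos_forall_le_norm_sub hx₀
  set R := sSup ((fun x => ‖x - x₀‖) '' Ω)
  have hd : 0 < 1 - β := sub_pos.2 hβ.2
  obtain ⟨l, hl⟩ : ∃ l, l = 2 / ((1 - β) * δ ^ 2) := ⟨_, rfl⟩
  have hl₀ : 0 < l := by rw [hl]; positivity
  set m := l * exp (l * (C₀ - β * T ^ 2))
  have hm : 0 < m := by positivity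
  have le_phi {p : Spacetime n} (hp : p.2 ∈ Icc 0 T) : m ≤ l * phi x₀ β C₀ l p.1 p.2 := by
    have : p.2 ^ 2 ≤ T ^ 2 := pow_le_pow_left₀ hp.1 hp.2 2
    have := hβ.1
    unfold m phi psi
    gcongr
    nlinarith [sq_nonneg ‖p.1 - x₀‖]
  refine ⟨l, hl₀, min (2 * m * (1 - β)) (min (m ^ 3 * ((1 - β) * (4 * δ ^ 2))) (m * (β * T - R))),
    lt_min (by positivity) (lt_min (by positivity) (mul_pos hm (sub_pos.2 htime))),
    contDiff_phi x₀ β C₀ l, contDiff_phiMultiplier x₀ β C₀ l, fun p hp => ?_, fun x _ => ?_,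
    fun x hx => ?_⟩
  · refine isPseudoconvexAt_phi hβ hδ (le_norm _ hp.1) hl ((min_le_left _ _).trans ?_)
      ((min_le_right _ _).trans ((min_le_left _ _).trans ?_)) <;> gcongr <;> exact le_phi hp.2
  · simp [pderiv_phi, pderiv_psi_none]
  · have norm_le : ‖x - x₀‖ ≤ R := norm_sub_le_sSup_image hΩ hx
    have hT : 0 ≤ T := (pos_of_mul_pos_right (((norm_nonneg _).trans norm_le).trans_lt htime)
      hβ.1.le).le
    have hgap : 0 ≤ β * T - R := sub_nonneg.2 htime.le
    have hphi := le_phi (p := (x, T)) (right_mem_Icc.2 hT)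
    have hconst := (min_le_right (2 * m * (1 - β)) _).trans
      (min_le_right (m ^ 3 * ((1 - β) * (4 * δ ^ 2))) (m * (β * T - R)))
    rw [sqrt_sum_sq_pderiv_phi hl₀.le, pderiv_phi, pderiv_psi_none]
    linarith [mul_le_mul_of_nonneg_right hphi hgap,
      mul_le_mul_of_nonneg_left norm_le (hm.le.trans hphi)]

end Phi

section Slices

variable {n : ℕ} {z : EuclideanSpace ℝ (Fin n) → ℝ → ℝ}

lemma sq_norm_gradient_eq_sum (f : EuclideanSpace ℝ (Fin n) → ℝ) (x : EuclideanSpace ℝ (Fin n)) :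
    ‖gradient f x‖ ^ 2 = ∑ i, fderiv ℝ f x (EuclideanSpace.single i 1) ^ 2 := by
  rw [EuclideanSpace.real_norm_sq_eq]
  refine Finset.sum_congr rfl fun i _ => congrArg (· ^ 2) ?_
  rw [← InnerProductSpace.toDual_symm_apply (𝕜 := ℝ), ← gradient,
    EuclideanSpace.inner_single_right, one_mul, conj_trivial]

lemma deriv_eq_pderiv (hz : ContDiff ℝ 2 (Function.uncurry z)) (x : EuclideanSpace ℝ (Fin n)) :
    deriv (z x) = fun t => (minkowski n).pderiv none (Function.uncurry z) (x, t) :=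
  funext fun _ => (hasDerivAt_pderiv_none (hz.differentiable two_ne_zero _)).deriv

lemma fderiv_single_eq_pderiv (hz : ContDiff ℝ 2 (Function.uncurry z))
    (x : EuclideanSpace ℝ (Fin n)) (t : ℝ) (i : Fin n) :
    fderiv ℝ (fun y => z y t) x (EuclideanSpace.single i 1)
      = (minkowski n).pderiv (some i) (Function.uncurry z) (x, t) :=
  fderiv_slice_single (hz.differentiable two_ne_zero _) i

lemma sq_deriv_add_sq_norm_gradient (hz : ContDiff ℝ 2 (Function.uncurry z))
    (x : EuclideanSpace ℝ (Fin n)) (t : ℝ) :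
    deriv (z x) t ^ 2 + ‖gradient (fun y => z y t) x‖ ^ 2
      = gradSq (Function.uncurry z) (x, t) := by
  rw [gradSq_eq_add_sum, deriv_eq_pderiv hz, sq_norm_gradient_eq_sum]
  simp only [fderiv_single_eq_pderiv hz]

lemma deriv_deriv_sub_lap (hz : ContDiff ℝ 2 (Function.uncurry z))
    (x : EuclideanSpace ℝ (Fin n)) (t : ℝ) :
    deriv (deriv (z x)) t - lap (fun y => z y t) x
      = (minkowski n).box (Function.uncurry z) (x, t) := by
  have hpderiv (a : Option (Fin n)) := (minkowski n).differentiable_pderiv hz a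
  rw [box_minkowski hz, deriv_eq_pderiv hz, (hasDerivAt_pderiv_none (hpderiv none _)).deriv, lap]
  simp only [fderiv_single_eq_pderiv hz, fderiv_slice_single (hpderiv _ _)]

end Slices

theorem carleman_one_sided_time_independent_potential_general
    {n : ℕ} {Ω : Set (EuclideanSpace ℝ (Fin n))} (hΩ : MeasurableSet Ω)
    (hΩb : Bornology.IsBounded Ω) {T : ℝ} {x₀ : EuclideanSpace ℝ (Fin n)}
    (hx₀ : x₀ ∉ closure Ω) {β : ℝ} (hβ : β ∈ Ioo 0 1)
    (htime : sSup ((fun x => ‖x - x₀‖) '' Ω) < β * T) (C₀ : ℝ) :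
    ∃ l > (0 : ℝ), ∀ m : ℝ, ∃ s₀ > (0 : ℝ), ∃ M > (0 : ℝ),
      ∀ q : EuclideanSpace ℝ (Fin n) → ℝ → ℝ,
        AEMeasurable (Function.uncurry q) (cylinderMeasure Ω T) →
        (∀ᵐ p ∂cylinderMeasure Ω T, |q p.1 p.2| ≤ m) →
      ∀ s ≥ s₀, ∀ z : EuclideanSpace ℝ (Fin n) → ℝ → ℝ, ContDiff ℝ 2 (Function.uncurry z) →
        (∃ K, IsCompact K ∧ K ⊆ Ω ∧ ∀ x ∉ K, ∀ t, z x t = 0) →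
        (∀ x ∈ Ω, z x 0 = 0) →
        √s * (∫ x in Ω, exp (2 * s * phi x₀ β C₀ l x 0) * deriv (z x) 0 ^ 2)
          + s * (∫ t in Ioo 0 T, ∫ x in Ω, exp (2 * s * phi x₀ β C₀ l x t)
              * (deriv (z x) t ^ 2 + ‖gradient (fun y => z y t) x‖ ^ 2))
          + s ^ 3 * (∫ t in Ioo 0 T, ∫ x in Ω, exp (2 * s * phi x₀ β C₀ l x t) * z x t ^ 2)
        ≤ M * ∫ t in Ioo 0 T, ∫ x in Ω, exp (2 * s * phi x₀ β C₀ l x t)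
            * (deriv (deriv (z x)) t - lap (fun y => z y t) x + q x t * z x t) ^ 2 := by
  have hT : 0 < T := by
    have radius_nonneg : 0 ≤ sSup ((fun x => ‖x - x₀‖) '' Ω) :=
      Real.sSup_nonneg (forall_mem_image.2 fun _ _ => norm_nonneg _)
    exact pos_of_mul_pos_right (radius_nonneg.trans_lt htime) hβ.1.le
  obtain ⟨l, hl, c, hφ⟩ := exists_isCarlemanWeight_phi hΩb hx₀ hβ htime C₀
  refine ⟨l, hl, fun m => ?_⟩
  obtain ⟨s₀, hs₀, M, hM, estimate⟩ := carleman_estimate_of_isCarlemanWeight hφ hΩ hΩb hT.le m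
  refine ⟨s₀, hs₀, M, hM, fun q hq hqm s hs z hz ⟨K, hK, hKΩ, hz₀⟩ hinit => ?_⟩
  have hweight : Continuous fun p => exp (2 * s * Function.uncurry (phi x₀ β C₀ l) p) :=
    (continuous_const.mul hφ.contDiff.continuous).rexp
  have hgrad : Integrable (fun p => exp (2 * s * Function.uncurry (phi x₀ β C₀ l) p)
      * gradSq (Function.uncurry z) p) (cylinderMeasure Ω T) :=
    integrable_cylinderMeasure hΩ hΩb T (hweight.mul (continuous_gradSq hz))
  have hsq : Integrable (fun p => exp (2 * s * Function.uncurry (phi x₀ β C₀ l) p)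
      * Function.uncurry z p ^ 2) (cylinderMeasure Ω T) :=
    integrable_cylinderMeasure hΩ hΩb T (hweight.mul (hz.continuous.pow 2))
  have hresidual := integrable_exp_mul_sq_residual hφ.contDiff hz s hΩ hΩb hq hqm
  have hinit' (x : EuclideanSpace ℝ (Fin n)) : z x 0 = 0 :=
    (em (x ∈ Ω)).elim (hinit x) fun hx => hz₀ x (fun h => hx (hKΩ h)) 0
  have carleman := estimate s hs (Function.uncurry q) (Function.uncurry z) hq hqm hz
    ⟨K, hK, hKΩ, hz₀⟩ hinit'
  rw [← setIntegral_setIntegral_eq hgrad, ← setIntegral_setIntegral_eq hsq,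
    ← setIntegral_setIntegral_eq hresidual] at carleman
  simp only [sq_deriv_add_sq_norm_gradient hz, deriv_deriv_sub_lap hz]
  simpa only [deriv_eq_pderiv hz, Function.uncurry_apply_pair] using carleman

/-- **One-sided-in-time Carleman estimate for a time-independent potential** (estimate (1.9) of
Theorem 1.2), specialized to functions supported, in the space variable, in a compact subset of
`Ω` and satisfying `z(·,0) = 0` on `Ω`:
`s^{1/2}∫_Ω e^{2sφ(0)}|∂ₜz(0)|² + s∫_0^T∫_Ω e^{2sφ}(|∂ₜz|² + |∇z|²) + s³∫_0^T∫_Ω e^{2sφ}z²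
  ≤ M∫_0^T∫_Ω e^{2sφ}|∂ₜ²z - Δz + qz|²`. -/
theorem carleman_one_sided_time_independent_potential
    (n : ℕ) (hn : 1 ≤ n)
    (Ω : Set (EuclideanSpace ℝ (Fin n))) (hΩo : IsOpen Ω) (hΩb : Bornology.IsBounded Ω)
    (T : ℝ) (hT : 0 < T)
    (x₀ : EuclideanSpace ℝ (Fin n)) (hx₀ : x₀ ∉ closure Ω)
    (β : ℝ) (hβ : β ∈ Set.Ioo (0:ℝ) 1)
    (htime : sSup ((fun x => ‖x - x₀‖) '' Ω) < β * T)
    (C₀ : ℝ) (hC₀ : 0 < C₀)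
    (hψ : ∀ x ∈ Ω, ∀ t ∈ Set.Ioo (-T) T, 1 ≤ psi x₀ β C₀ x t) :
    ∃ l > (0:ℝ), ∀ m > (0:ℝ), ∃ s₀ > (0:ℝ), ∃ M > (0:ℝ),
      ∀ q : EuclideanSpace ℝ (Fin n) → ℝ, Measurable q →
        (∀ᵐ x ∂((volume : Measure (EuclideanSpace ℝ (Fin n))).restrict Ω), |q x| ≤ m) →
      ∀ s ≥ s₀,
      ∀ z : EuclideanSpace ℝ (Fin n) → ℝ → ℝ,
        ContDiff ℝ (⊤ : ℕ∞) (fun p : EuclideanSpace ℝ (Fin n) × ℝ => z p.1 p.2) →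
        (∃ K : Set (EuclideanSpace ℝ (Fin n)), IsCompact K ∧ K ⊆ Ω ∧
          ∀ x ∉ K, ∀ t : ℝ, z x t = 0) →
        (∀ x ∈ Ω, z x 0 = 0) →
        Real.sqrt s * (∫ x in Ω,
              Real.exp (2 * s * phi x₀ β C₀ l x 0) * (deriv (z x) 0) ^ 2)
          + s * (∫ t in Set.Ioo (0:ℝ) T, ∫ x in Ω, Real.exp (2 * s * phi x₀ β C₀ l x t) *
              ((deriv (z x) t) ^ 2 + ‖gradient (fun y => z y t) x‖ ^ 2))
          + s ^ 3 * (∫ t in Set.Ioo (0:ℝ) T, ∫ x in Ω,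
              Real.exp (2 * s * phi x₀ β C₀ l x t) * (z x t) ^ 2)
        ≤ M * ∫ t in Set.Ioo (0:ℝ) T, ∫ x in Ω, Real.exp (2 * s * phi x₀ β C₀ l x t) *
            (deriv (deriv (z x)) t - lap (fun y => z y t) x + q x * z x t) ^ 2 := by
  obtain ⟨l, hl, estimate⟩ := carleman_one_sided_time_independent_potential_general
    hΩo.measurableSet hΩb hx₀ hβ htime C₀
  refine ⟨l, hl, fun m _ => ?_⟩
  obtain ⟨s₀, hs₀, M, hM, estimate⟩ := estimate m
  exact ⟨s₀, hs₀, M, hM, fun q hq hqm s hs z hz hK hz₀ => estimate (fun x _ => q x)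
    (hq.comp measurable_fst).aemeasurable (Measure.quasiMeasurePreserving_fst.ae hqm) s hs z
    (hz.of_le (by norm_cast)) hK hz₀⟩
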